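/- arXiv:1511.00136 — 2 statements merged into one kernel-verified Lean document; each statement's English description precedes it below -/
import Mathlib

section
/- For every n ≥ 2 and every braid α ∈ UVB_n, there exists a pure braid β ∈ UVP_m, where m is the number of orbits of the permutation ι(α) acting on {1,…,n} (with UVP_1 interpreted as the trivial group), such that α and β are fused Markov equivalent. (Equivalently: every unrestricted virtual braid whose closure has m components is fused Markov equivalent to a pure unrestricted virtual braid on m strands.) -/
/-!  Common setup: the unrestricted virtual braid group `UVB n`, its generators
σ_k, ρ_k (1-based indices), the elements λ_{i,j} and B_{i,j}, the permutation
homomorphism ι (characterized by `IsIota`), the section s : S_n → UVB n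
(characterized by `IsPermSection`), and fused Markov equivalence. -/

/-- Generators of the unrestricted virtual braid group `UVB n`:
`Sum.inl i` is the classical generator σ_{i+1} and `Sum.inr i` is the virtual
generator ρ_{i+1}, for `i : Fin (n-1)` (so the 1-based indices are `1, …, n-1`). -/
abbrev UVBGen (n : ℕ) := Sum (Fin (n - 1)) (Fin (n - 1))

namespace UVBGen
def sg {n : ℕ} (i : Fin (n - 1)) : FreeGroup (UVBGen n) := FreeGroup.of (Sum.inl i)
def rg {n : ℕ} (i : Fin (n - 1)) : FreeGroup (UVBGen n) := FreeGroup.of (Sum.inr i)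
end UVBGen

open UVBGen in
/-- The defining relations of the unrestricted virtual braid group. -/
def uvbRels (n : ℕ) : Set (FreeGroup (UVBGen n)) :=
  {r | (∃ i j : Fin (n - 1), (j : ℕ) = (i : ℕ) + 1 ∧
          (r = sg i * sg j * sg i * (sg j * sg i * sg j)⁻¹ ∨
           r = rg i * rg j * rg i * (rg j * rg i * rg j)⁻¹ ∨
           r = rg i * rg j * sg i * (sg j * rg i * rg j)⁻¹ ∨
           r = rg i * sg j * sg i * (sg j * sg i * rg j)⁻¹ ∨
           r = rg j * sg i * sg j * (sg i * sg j * rg i)⁻¹)) ∨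
       (∃ i j : Fin (n - 1), ((i : ℕ) + 2 ≤ (j : ℕ) ∨ (j : ℕ) + 2 ≤ (i : ℕ)) ∧
          (r = sg i * sg j * (sg j * sg i)⁻¹ ∨
           r = rg i * rg j * (rg j * rg i)⁻¹ ∨
           r = sg i * rg j * (rg j * sg i)⁻¹)) ∨
       (∃ i : Fin (n - 1), r = rg i * rg i)}

/-- The unrestricted virtual braid group on `n` strands. -/
abbrev UVB (n : ℕ) := PresentedGroup (uvbRels n)

namespace UVB

/-- The generator σ_k (1-based index; meaningful for `1 ≤ k ≤ n-1`, junk value `1` otherwise). -/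
def sigma (n k : ℕ) : UVB n :=
  if h : 1 ≤ k ∧ k ≤ n - 1 then PresentedGroup.of (Sum.inl ⟨k - 1, by omega⟩) else 1

/-- The generator ρ_k (1-based index; meaningful for `1 ≤ k ≤ n-1`, junk value `1` otherwise). -/
def rho (n k : ℕ) : UVB n :=
  if h : 1 ≤ k ∧ k ≤ n - 1 then PresentedGroup.of (Sum.inr ⟨k - 1, by omega⟩) else 1

/-- The element λ_{i,j} of `UVB n` (1-based indices `1 ≤ i ≠ j ≤ n`; junk value `1` if `i = j`).
For `i < j`:  `λ_{i,j} = ρ_{j-1}⋯ρ_{i+1} · ρ_i σ_i⁻¹ · ρ_{i+1}⋯ρ_{j-1}` and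
`λ_{j,i} = ρ_{j-1}⋯ρ_{i+1} · σ_i⁻¹ ρ_i · ρ_{i+1}⋯ρ_{j-1}`. -/
def lam (n i j : ℕ) : UVB n :=
  if i < j then
    (((List.range' (i + 1) (j - 1 - i)).reverse.map (rho n)).prod) *
      (rho n i * (sigma n i)⁻¹) *
      (((List.range' (i + 1) (j - 1 - i)).map (rho n)).prod)
  else if j < i then
    (((List.range' (j + 1) (i - 1 - j)).reverse.map (rho n)).prod) *
      ((sigma n j)⁻¹ * rho n j) *
      (((List.range' (j + 1) (i - 1 - j)).map (rho n)).prod)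
  else 1

/-- The element `B_{i,j} = ρ_{j-1}ρ_{j-2}⋯ρ_{i+1}ρ_i` for `i < j`, and `1` otherwise. -/
def B (n i j : ℕ) : UVB n :=
  if i < j then ((List.range' i (j - i)).reverse.map (rho n)).prod else 1

/-- The subgroup `U_j` of `UVB n` generated by `{λ_{i,j}, λ_{j,i} : 1 ≤ i < j}`. -/
def U (n j : ℕ) : Subgroup (UVB n) :=
  Subgroup.closure {x | ∃ i, 1 ≤ i ∧ i < j ∧ (x = lam n i j ∨ x = lam n j i)}

end UVB

/-- `ι : UVB n →* S_n` is the homomorphism sending σ_k and ρ_k to the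
transposition (k, k+1) (written 0-based on `Fin n`). -/
def IsIota (n : ℕ) (ι : UVB n →* Equiv.Perm (Fin n)) : Prop :=
  ∀ (k : ℕ) (h1 : 1 ≤ k) (h2 : k ≤ n - 1),
    ι (UVB.sigma n k) = Equiv.swap ⟨k - 1, by omega⟩ ⟨k, by omega⟩ ∧
    ι (UVB.rho n k) = Equiv.swap ⟨k - 1, by omega⟩ ⟨k, by omega⟩

/-- `s : S_n →* UVB n` is the homomorphism sending the transposition (k, k+1) to ρ_k. -/
def IsPermSection (n : ℕ) (s : Equiv.Perm (Fin n) →* UVB n) : Prop :=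
  ∀ (k : ℕ) (h1 : 1 ≤ k) (h2 : k ≤ n - 1),
    s (Equiv.swap ⟨k - 1, by omega⟩ ⟨k, by omega⟩) = UVB.rho n k

/-- The number of orbits of a permutation of `Fin n`
(= number of fixed points + number of nontrivial cycles). -/
def numOrbits {n : ℕ} (π : Equiv.Perm (Fin n)) : ℕ :=
  (Finset.univ.filter fun x => π x = x).card + π.cycleType.card

namespace UVB

private def embedGen (n : ℕ) : UVBGen n → UVBGen (n + 1)
  | Sum.inl i => Sum.inl ⟨i.val, by have := i.isLt; omega⟩
  | Sum.inr i => Sum.inr ⟨i.val, by have := i.isLt; omega⟩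

open UVBGen in
/-- The natural inclusion `UVB n →* UVB (n+1)` (σ_k ↦ σ_k, ρ_k ↦ ρ_k). -/
def incl (n : ℕ) : UVB n →* UVB (n + 1) :=
  PresentedGroup.toGroup (f := fun x => PresentedGroup.of (embedGen n x)) (by
    have key : (FreeGroup.lift fun x => (PresentedGroup.of (embedGen n x) : UVB (n + 1)))
        = (PresentedGroup.mk (uvbRels (n + 1))).comp (FreeGroup.map (embedGen n)) := by
      ext x
      simp [PresentedGroup.of]
    intro r hr
    rw [key]
    simp only [MonoidHom.comp_apply]
    have hmem : FreeGroup.map (embedGen n) r ∈ uvbRels (n + 1) := by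
      have hsg : ∀ i : Fin (n - 1), FreeGroup.map (embedGen n) (sg i)
          = sg (⟨i.val, by have := i.isLt; omega⟩ : Fin (n + 1 - 1)) := by
        intro i; simp [sg, embedGen]
      have hrg : ∀ i : Fin (n - 1), FreeGroup.map (embedGen n) (rg i)
          = rg (⟨i.val, by have := i.isLt; omega⟩ : Fin (n + 1 - 1)) := by
        intro i; simp [rg, embedGen]
      rcases hr with ⟨i, j, hij, hc⟩ | ⟨i, j, hij, hc⟩ | ⟨i, hc⟩
      · refine Or.inl ⟨⟨i.val, by have := i.isLt; omega⟩, ⟨j.val, by have := j.isLt; omega⟩,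
          by simpa using hij, ?_⟩
        rcases hc with h | h | h | h | h <;> subst h <;>
          simp only [map_mul, map_inv, hsg, hrg] <;> tauto
      · refine Or.inr (Or.inl ⟨⟨i.val, by have := i.isLt; omega⟩, ⟨j.val, by have := j.isLt; omega⟩,
          by simpa using hij, ?_⟩)
        rcases hc with h | h | h <;> subst h <;>
          simp only [map_mul, map_inv, hsg, hrg] <;> tauto
      · refine Or.inr (Or.inr ⟨⟨i.val, by have := i.isLt; omega⟩, ?_⟩)
        subst hc
        simp only [map_mul, hsg, hrg]
    exact (QuotientGroup.eq_one_iff _).mpr (Subgroup.subset_normalClosure hmem))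

end UVB

/-- The elementary fused Markov moves on the disjoint union of the groups `UVB n`:
conjugation, and the three right stabilizations (positive, negative, virtual). -/
inductive MarkovBase : (Σ n, UVB n) → (Σ n, UVB n) → Prop
  | conj (n : ℕ) (α γ : UVB n) : MarkovBase ⟨n, α⟩ ⟨n, γ * α * γ⁻¹⟩
  | stabPos (n : ℕ) (α : UVB n) :
      MarkovBase ⟨n, α⟩ ⟨n + 1, UVB.incl n α * UVB.sigma (n + 1) n⟩
  | stabNeg (n : ℕ) (α : UVB n) :
      MarkovBase ⟨n, α⟩ ⟨n + 1, UVB.incl n α * (UVB.sigma (n + 1) n)⁻¹⟩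
  | stabVirt (n : ℕ) (α : UVB n) :
      MarkovBase ⟨n, α⟩ ⟨n + 1, UVB.incl n α * UVB.rho (n + 1) n⟩

/-- Fused Markov equivalence: the smallest equivalence relation generated by the
elementary Markov moves.  By Kamada's theorem, two unrestricted virtual braids are
fused Markov equivalent iff their closures are equivalent fused links. -/
def Markov : (Σ n, UVB n) → (Σ n, UVB n) → Prop := Relation.EqvGen MarkovBase

namespace UVBProof
open Equiv UVB

lemma sigma_of {n : ℕ} (i : Fin (n-1)) : (PresentedGroup.of (Sum.inl i) : UVB n) = sigma n (i.val+1) := by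
  unfold sigma
  rw [dif_pos ⟨by omega, by have := i.isLt; omega⟩]
  simp

lemma rho_of {n : ℕ} (i : Fin (n-1)) : (PresentedGroup.of (Sum.inr i) : UVB n) = rho n (i.val+1) := by
  unfold rho
  rw [dif_pos ⟨by omega, by have := i.isLt; omega⟩]
  simp

lemma rel_one {n : ℕ} {r : FreeGroup (UVBGen n)} (h : r ∈ uvbRels n) :
    PresentedGroup.mk (uvbRels n) r = 1 :=
  (QuotientGroup.eq_one_iff _).mpr (Subgroup.subset_normalClosure h)

lemma mk_sg {n : ℕ} (i : Fin (n-1)) :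
    PresentedGroup.mk (uvbRels n) (UVBGen.sg i) = sigma n (i.val+1) := sigma_of i

lemma mk_rg {n : ℕ} (i : Fin (n-1)) :
    PresentedGroup.mk (uvbRels n) (UVBGen.rg i) = rho n (i.val+1) := rho_of i

/-- The mixed relations of the presentation in consecutive indices. -/
lemma rel_adj {n k : ℕ} (h1 : 1 ≤ k) (h2 : k + 1 ≤ n - 1) :
    sigma n k * sigma n (k+1) * sigma n k = sigma n (k+1) * sigma n k * sigma n (k+1) ∧
    rho n k * rho n (k+1) * rho n k = rho n (k+1) * rho n k * rho n (k+1) ∧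
    rho n k * rho n (k+1) * sigma n k = sigma n (k+1) * rho n k * rho n (k+1) ∧
    rho n k * sigma n (k+1) * sigma n k = sigma n (k+1) * sigma n k * rho n (k+1) ∧
    rho n (k+1) * sigma n k * sigma n (k+1) = sigma n k * sigma n (k+1) * rho n k := by
  obtain ⟨k, rfl⟩ : ∃ k', k = k' + 1 := ⟨k - 1, by omega⟩
  have hk1 : k < n - 1 := by omega
  have hk2 : k + 1 < n - 1 := by omega
  have key := fun (r : FreeGroup (UVBGen n)) hr =>
    rel_one (n := n) (r := r) (Or.inl ⟨⟨k, hk1⟩, ⟨k+1, hk2⟩, rfl, hr⟩)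
  refine ⟨?_, ?_, ?_, ?_, ?_⟩
  · simpa only [map_mul, map_inv, mk_sg, mk_rg, mul_inv_eq_one] using key _ (Or.inl rfl)
  · simpa only [map_mul, map_inv, mk_sg, mk_rg, mul_inv_eq_one] using key _ (Or.inr (Or.inl rfl))
  · simpa only [map_mul, map_inv, mk_sg, mk_rg, mul_inv_eq_one] using
      key _ (Or.inr (Or.inr (Or.inl rfl)))
  · simpa only [map_mul, map_inv, mk_sg, mk_rg, mul_inv_eq_one] using
      key _ (Or.inr (Or.inr (Or.inr (Or.inl rfl))))
  · simpa only [map_mul, map_inv, mk_sg, mk_rg, mul_inv_eq_one] using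
      key _ (Or.inr (Or.inr (Or.inr (Or.inr rfl))))

lemma sigma_junk {n k : ℕ} (h : ¬ (1 ≤ k ∧ k ≤ n - 1)) : sigma n k = 1 := by
  unfold sigma; rw [dif_neg h]

lemma rho_junk {n k : ℕ} (h : ¬ (1 ≤ k ∧ k ≤ n - 1)) : rho n k = 1 := by
  unfold rho; rw [dif_neg h]

lemma rel_far {n k l : ℕ} (h : k + 2 ≤ l ∨ l + 2 ≤ k) :
    Commute (sigma n k) (sigma n l) ∧ Commute (rho n k) (rho n l) ∧
      Commute (sigma n k) (rho n l) := by
  by_cases hk : 1 ≤ k ∧ k ≤ n - 1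
  swap
  · simp [sigma_junk hk, rho_junk hk]
  by_cases hl : 1 ≤ l ∧ l ≤ n - 1
  swap
  · simp [sigma_junk hl, rho_junk hl]
  obtain ⟨k, rfl⟩ : ∃ k', k = k' + 1 := ⟨k - 1, by omega⟩
  obtain ⟨l, rfl⟩ : ∃ k', l = k' + 1 := ⟨l - 1, by omega⟩
  have hk1 : k < n - 1 := by omega
  have hk2 : l < n - 1 := by omega
  have hkl : k + 2 ≤ l ∨ l + 2 ≤ k := by omega
  have key := fun (r : FreeGroup (UVBGen n)) hr =>
    rel_one (n := n) (r := r) (Or.inr (Or.inl ⟨⟨k, hk1⟩, ⟨l, hk2⟩, hkl, hr⟩))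
  refine ⟨?_, ?_, ?_⟩ <;> unfold Commute SemiconjBy
  · simpa only [map_mul, map_inv, mk_sg, mk_rg, mul_inv_eq_one] using key _ (Or.inl rfl)
  · simpa only [map_mul, map_inv, mk_sg, mk_rg, mul_inv_eq_one] using key _ (Or.inr (Or.inl rfl))
  · simpa only [map_mul, map_inv, mk_sg, mk_rg, mul_inv_eq_one] using
      key _ (Or.inr (Or.inr rfl))

lemma rho_sq (n k : ℕ) : rho n k * rho n k = 1 := by
  by_cases hk : 1 ≤ k ∧ k ≤ n - 1
  swap
  · simp [rho_junk hk]
  obtain ⟨k, rfl⟩ : ∃ k', k = k' + 1 := ⟨k - 1, by omega⟩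
  have := rel_one (n := n) (r := UVBGen.rg ⟨k, by omega⟩ * UVBGen.rg ⟨k, by omega⟩)
    (Or.inr (Or.inr ⟨⟨k, by omega⟩, rfl⟩))
  simpa only [map_mul, mk_rg] using this

lemma rho_inv (n k : ℕ) : (rho n k)⁻¹ = rho n k := inv_eq_of_mul_eq_one_right (rho_sq n k)

lemma incl_sigma {n k : ℕ} (h2 : k ≤ n - 1) : incl n (sigma n k) = sigma (n+1) k := by
  by_cases hk : 1 ≤ k
  swap
  · rw [sigma_junk (by omega), sigma_junk (by omega), map_one]
  obtain ⟨k, rfl⟩ : ∃ k', k = k' + 1 := ⟨k - 1, by omega⟩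
  rw [← sigma_of (n := n) ⟨k, by omega⟩, ← sigma_of (n := n+1) ⟨k, by omega⟩]
  unfold incl
  rw [PresentedGroup.toGroup.of]
  rfl

lemma incl_rho {n k : ℕ} (h2 : k ≤ n - 1) : incl n (rho n k) = rho (n+1) k := by
  by_cases hk : 1 ≤ k
  swap
  · rw [rho_junk (by omega), rho_junk (by omega), map_one]
  obtain ⟨k, rfl⟩ : ∃ k', k = k' + 1 := ⟨k - 1, by omega⟩
  rw [← rho_of (n := n) ⟨k, by omega⟩, ← rho_of (n := n+1) ⟨k, by omega⟩]
  unfold incl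
  rw [PresentedGroup.toGroup.of]
  rfl

/-- The virtual permutation subgroup on the first `k` strands. -/
def R (n k : ℕ) : Subgroup (UVB n) := Subgroup.closure {x | ∃ j, j < k ∧ x = rho n j}

lemma rho_mem_R {n k j : ℕ} (h : j < k) : rho n j ∈ R n k :=
  Subgroup.subset_closure ⟨j, h, rfl⟩

lemma R_mono {n k l : ℕ} (h : k ≤ l) : R n k ≤ R n l := by
  apply Subgroup.closure_mono
  rintro x ⟨j, hj, rfl⟩
  exact ⟨j, by omega, rfl⟩

lemma R_comm_rho {n k l : ℕ} (h : k + 1 ≤ l) {v : UVB n} (hv : v ∈ R n k) :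
    Commute v (rho n l) ∧ Commute v (sigma n l) := by
  induction hv using Subgroup.closure_induction with
  | mem x hx =>
    obtain ⟨j, hj, rfl⟩ := hx
    exact ⟨(rel_far (by omega)).2.1, ((rel_far (by omega)).2.2).symm⟩
  | one => simp
  | mul x y _ _ hx hy => exact ⟨hx.1.mul_left hy.1, hx.2.mul_left hy.2⟩
  | inv x _ hx => exact ⟨hx.1.inv_left, hx.2.inv_left⟩

/-- Double coset decomposition of the virtual permutation subgroup. -/
lemma R_double {n : ℕ} (k : ℕ) (hk : k ≤ n - 1) {v : UVB n} (hv : v ∈ R n (k+1)) :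
    v ∈ R n k ∨ ∃ a ∈ R n k, ∃ b ∈ R n k, v = a * rho n k * b := by
  induction k generalizing v with
  | zero =>
    left
    induction hv using Subgroup.closure_induction with
    | mem x hx =>
      obtain ⟨j, hj, rfl⟩ := hx
      rw [rho_junk (by omega)]
      exact one_mem _
    | one => exact one_mem _
    | mul x y _ _ hx hy => exact mul_mem hx hy
    | inv x _ hx => exact inv_mem hx
  | succ k ih =>
    have step : ∀ (x y : UVB n), (x ∈ R n (k+1) ∨ ∃ a ∈ R n (k+1), ∃ b ∈ R n (k+1),
        x = a * rho n (k+1) * b) → (∃ j, j < k + 2 ∧ y = rho n j) →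
        (x * y ∈ R n (k+1) ∨ ∃ a ∈ R n (k+1), ∃ b ∈ R n (k+1),
        x * y = a * rho n (k+1) * b) := by
      rintro x y hx ⟨j, hj, rfl⟩
      rcases Nat.lt_or_ge j (k+1) with hj' | hj'
      · rcases hx with hx | ⟨a, ha, b, hb, rfl⟩
        · exact Or.inl (mul_mem hx (rho_mem_R hj'))
        · exact Or.inr ⟨a, ha, b * rho n j, mul_mem hb (rho_mem_R hj'), by group⟩
      · obtain rfl : j = k+1 := by omega
        rcases hx with hx | ⟨a, ha, b, hb, rfl⟩
        · exact Or.inr ⟨x, hx, 1, one_mem _, by group⟩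
        · rcases ih (by omega) hb with hb' | ⟨c, hc, d, hd, rfl⟩
          · left
            rw [mul_assoc, (R_comm_rho (le_refl _) hb').1.eq, mul_assoc, ← mul_assoc (rho n (k+1)),
              rho_sq, one_mul]
            exact mul_mem ha hb
          · rcases Nat.eq_zero_or_pos k with rfl | hk0
            · left
              rw [rho_junk (k := 0) (by omega), mul_one]
              have hb' := mul_mem hc hd
              rw [mul_assoc, (R_comm_rho (le_refl _) hb').1.eq, mul_assoc,
                ← mul_assoc (rho n (0+1)), rho_sq, one_mul]
              exact mul_mem ha (R_mono (by omega) hb')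
            · right
              refine ⟨a * c * rho n k, mul_mem (mul_mem ha (R_mono (by omega) hc))
                (rho_mem_R (by omega)), rho n k * d, mul_mem (rho_mem_R (by omega))
                (R_mono (by omega) hd), ?_⟩
              have h1 := (R_comm_rho (le_refl _) hc).1.eq
              have h2 := (R_comm_rho (le_refl _) hd).1.eq
              have h3 := (rel_adj (n := n) hk0 (by omega)).2.1
              calc a * rho n (k+1) * (c * rho n k * d) * rho n (k+1)
                  = a * (rho n (k+1) * c) * rho n k * (d * rho n (k+1)) := by group
                _ = a * c * (rho n (k+1) * rho n k * rho n (k+1)) * d := by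
                    rw [← h1, h2]; group
                _ = _ := by rw [← h3]; group
    induction hv using Subgroup.closure_induction_right with
    | one => exact Or.inl (one_mem _)
    | mul_right x _ y hy hx => exact step x y hx hy
    | mul_inv_cancel x _ y hy hx =>
      apply step _ _ hx
      obtain ⟨j, hj, rfl⟩ := hy
      exact ⟨j, hj, rho_inv n j⟩

lemma iota_R {n : ℕ} {ι : UVB n →* Perm (Fin n)} (hι : IsIota n ι) {k : ℕ} {v : UVB n}
    (hv : v ∈ R n k) (x : Fin n) (hx : k ≤ x.val) : ι v x = x := by
  induction hv using Subgroup.closure_induction with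
  | mem y hy =>
    obtain ⟨j, hj, rfl⟩ := hy
    by_cases h : 1 ≤ j
    · rw [(hι j h (by have := x.isLt; omega)).2]
      apply swap_apply_of_ne_of_ne <;> intro h <;> rw [h] at hx <;> simp at hx <;> omega
    · rw [rho_junk (by omega)]; simp
  | one => simp
  | mul a b _ _ ha hb => rw [map_mul, Perm.mul_apply, hb, ha]
  | inv a _ ha => rw [map_inv, Perm.inv_eq_iff_eq, ha]

lemma R_fix {n : ℕ} {ι : UVB n →* Perm (Fin n)} (hι : IsIota n ι) {k : ℕ} (hk : k < n) {v : UVB n}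
    (hv : v ∈ R n (k+1)) (hfix : ι v ⟨k, hk⟩ = ⟨k, hk⟩) : v ∈ R n k := by
  rcases Nat.eq_zero_or_pos k with rfl | hk0
  · rcases R_double 0 (by omega) hv with h | ⟨a, ha, b, hb, rfl⟩
    · exact h
    · rw [rho_junk (by omega), mul_one]; exact mul_mem ha hb
  rcases R_double k (by omega) hv with h | ⟨a, ha, b, hb, rfl⟩
  · exact h
  · exfalso
    rw [map_mul, map_mul, Perm.mul_apply, Perm.mul_apply, iota_R hι hb _ (le_refl _),
      (hι k hk0 (by omega)).2, swap_apply_right] at hfix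
    have h2 := iota_R hι ha ⟨k, hk⟩ (le_refl _)
    have := (ι a).injective (hfix.trans h2.symm)
    simp at this
    omega

lemma R_inj {n : ℕ} {ι : UVB n →* Perm (Fin n)} (hι : IsIota n ι) {v : UVB n}
    (hv : v ∈ R n n) (h1 : ι v = 1) : v = 1 := by
  have : ∀ k, k ≤ n → v ∈ R n (n - k) := by
    intro k
    induction k with
    | zero => intro _; exact hv
    | succ k ih =>
      intro hk
      have h := ih (by omega)
      rw [show n - k = n - (k+1) + 1 by omega] at h
      exact R_fix hι (by omega) h (by rw [h1]; rfl)
  have h := this n le_rfl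
  rw [Nat.sub_self] at h
  have h0 : R n 0 = ⊥ := by
    unfold R
    rw [Subgroup.closure_eq_bot_iff]
    rintro x ⟨j, hj, _⟩
    omega
  rw [h0] at h
  exact h

/-- Adjacent transpositions generate. -/
lemma perm_adj_induction {n : ℕ} {H : Subgroup (Perm (Fin n))}
    (h : ∀ (k : ℕ) (_ : 1 ≤ k) (_ : k ≤ n - 1),
      swap (⟨k - 1, by omega⟩ : Fin n) ⟨k, by omega⟩ ∈ H) : H = ⊤ := by
  rcases n with _ | n
  · apply top_unique
    intro x _
    rw [Subsingleton.elim x 1]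
    exact one_mem _
  apply Subgroup.toSubmonoid_injective
  apply top_unique
  rw [← Perm.mclosure_swap_castSucc_succ n, Submonoid.closure_le]
  rintro _ ⟨i, rfl⟩
  have := h (i.val+1) (by omega) (by have := i.isLt; omega)
  exact this

lemma exists_sec {n : ℕ} {ι : UVB n →* Perm (Fin n)} (hι : IsIota n ι) :
    ∃ s : Perm (Fin n) →* UVB n, IsPermSection n s ∧ (∀ π, ι (s π) = π) ∧ ∀ π, s π ∈ R n n := by
  let f : R n n →* Perm (Fin n) := ι.comp (R n n).subtype
  have hinj : Function.Injective f := by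
    rw [injective_iff_map_eq_one]
    intro a ha
    exact Subtype.ext (R_inj hι a.2 ha)
  have hsurj : Function.Surjective f := by
    rw [← MonoidHom.range_eq_top]
    apply perm_adj_induction
    intro k h1 h2
    exact ⟨⟨rho n k, rho_mem_R (by omega)⟩, (hι k h1 h2).2⟩
  let e := MulEquiv.ofBijective f ⟨hinj, hsurj⟩
  refine ⟨(R n n).subtype.comp e.symm.toMonoidHom, ?_, ?_, ?_⟩
  · intro k h1 h2
    have : e ⟨rho n k, rho_mem_R (by omega)⟩ = swap ⟨k - 1, by omega⟩ ⟨k, by omega⟩ :=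
      (hι k h1 h2).2
    rw [← this]
    simp
  · intro π
    exact e.apply_symm_apply π
  · intro π
    exact (e.symm π).2

end UVBProof

namespace UVBProof
open Equiv UVB

lemma exists_perm {α : Type*} {k : ℕ} (f g : Fin k → α) (hf : Function.Injective f)
    (hg : Function.Injective g) : ∃ τ : Perm α, ∀ x, τ (f x) = g x := by
  obtain ⟨τ, hτ⟩ := (Equiv.Perm.isMultiplyPretransitive α k).exists_smul_eq ⟨f, hf⟩ ⟨g, hg⟩
  refine ⟨τ, fun x => ?_⟩
  have := DFunLike.congr_fun hτ x
  simpa using this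

lemma exists_perm2 {α : Type*} {a b c d : α} (h : a ≠ b) (h' : c ≠ d) :
    ∃ τ : Perm α, τ a = c ∧ τ b = d := by
  obtain ⟨τ, hτ⟩ := exists_perm ![a, b] ![c, d]
    (by intro x y; fin_cases x <;> fin_cases y <;> simp [h, h.symm])
    (by intro x y; fin_cases x <;> fin_cases y <;> simp [h', h'.symm])
  exact ⟨τ, hτ 0, hτ 1⟩

/-- Package: the section, the pure generators `L i j`, and their properties. -/
structure Good (n : ℕ) (ι : UVB n →* Perm (Fin n)) (s : Perm (Fin n) →* UVB n)
    (L : Fin n → Fin n → UVB n) : Prop where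
  iota : IsIota n ι
  sec : IsPermSection n s
  ret : ∀ π, ι (s π) = π
  conj : ∀ (π : Perm (Fin n)) (i j : Fin n), i ≠ j → s π * L i j * (s π)⁻¹ = L (π i) (π j)
  adj : ∀ (k : ℕ) (_ : 1 ≤ k) (_ : k ≤ n - 1),
    L ⟨k - 1, by omega⟩ ⟨k, by omega⟩ = rho n k * (sigma n k)⁻¹

lemma exists_good {n : ℕ} {ι : UVB n →* Perm (Fin n)} (hι : IsIota n ι) :
    ∃ s L, Good n ι s L := by
  classical
  obtain ⟨s, hs, hret, hR⟩ := exists_sec hι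
  rcases Nat.lt_or_ge n 2 with hn | hn
  · refine ⟨s, fun _ _ => 1, hι, hs, hret, by simp, fun k _ _ => by omega⟩
  let g : UVB n := rho n (n-1) * (sigma n (n-1))⁻¹
  let p : Fin n := ⟨n-2, by omega⟩
  let q : Fin n := ⟨n-1, by omega⟩
  have hpq : p ≠ q := by simp [p, q]; omega
  let L : Fin n → Fin n → UVB n := fun i j =>
    if h : ∃ τ : Perm (Fin n), τ p = i ∧ τ q = j then s h.choose * g * (s h.choose)⁻¹ else 1
  have hfix : ∀ π : Perm (Fin n), π p = p → π q = q → Commute (s π) g := by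
    intro π h1 h2
    have h3 := hR π
    have h4 : s π ∈ R n (n-1) := by
      apply R_fix hι (k := n-1) (by omega)
      · rwa [Nat.sub_add_cancel (by omega)]
      · rw [hret]; exact h2
    have h5 : s π ∈ R n (n-2) := by
      apply R_fix hι (k := n-2) (by omega)
      · rwa [show n - 2 + 1 = n - 1 by omega]
      · rw [hret]; exact h1
    have := R_comm_rho (l := n-1) (by omega) h5
    exact this.1.mul_right this.2.inv_right
  have hL : ∀ τ : Perm (Fin n), L (τ p) (τ q) = s τ * g * (s τ)⁻¹ := by
    intro τ
    have h : ∃ τ' : Perm (Fin n), τ' p = τ p ∧ τ' q = τ q := ⟨τ, rfl, rfl⟩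
    have e : L (τ p) (τ q) = s h.choose * g * (s h.choose)⁻¹ := dif_pos h
    obtain ⟨h1, h2⟩ := h.choose_spec
    rw [e]
    generalize h.choose = τ' at h1 h2
    have := hfix (τ⁻¹ * τ') (by rw [Perm.mul_apply, h1]; simp) (by rw [Perm.mul_apply, h2]; simp)
    rw [map_mul, map_inv] at this
    have h3 := this.eq
    calc s τ' * g * (s τ')⁻¹ = s τ * ((s τ)⁻¹ * s τ' * g) * (s τ')⁻¹ := by group
      _ = _ := by rw [h3]; group
  have hconj : ∀ (π : Perm (Fin n)) (i j : Fin n), i ≠ j →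
      s π * L i j * (s π)⁻¹ = L (π i) (π j) := by
    intro π i j hij
    obtain ⟨τ, rfl, rfl⟩ := exists_perm2 hpq hij
    have := hL (π * τ)
    rw [Perm.mul_apply, Perm.mul_apply] at this
    rw [this, hL, map_mul]
    group
  refine ⟨s, L, hι, hs, hret, hconj, ?_⟩
  have hdown : ∀ d k : ℕ, k + d = n - 1 → ∀ (_ : 1 ≤ k) (_ : k ≤ n - 1),
      L ⟨k - 1, by omega⟩ ⟨k, by omega⟩ = rho n k * (sigma n k)⁻¹ := by
    intro d
    induction d with
    | zero =>
      intro k hkd h1 h2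
      have := hL 1
      simp only [map_one, one_mul, inv_one, mul_one, Perm.one_apply] at this
      obtain rfl : k = n - 1 := by omega
      have hp : (⟨n - 1 - 1, by omega⟩ : Fin n) = p := by simp only [p, Fin.mk.injEq]; omega
      rw [hp]; exact this
    | succ d ih =>
      intro k hkd h1 h2
      have h := ih (k+1) (by omega) (by omega) (by omega)
      have h3 := hconj (swap ⟨k-1, by omega⟩ ⟨k, by omega⟩ * swap ⟨k, by omega⟩ ⟨k+1, by omega⟩)
        ⟨k-1, by omega⟩ ⟨k, by omega⟩ (by simp <;> omega)
      have hs' : s (swap ⟨k, by omega⟩ ⟨k+1, by omega⟩) = rho n (k+1) :=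
        hs (k+1) (by omega) (by omega)
      rw [map_mul, hs k h1 h2, hs'] at h3
      have t1 : swap (⟨k, by omega⟩ : Fin n) ⟨k+1, by omega⟩ ⟨k-1, by omega⟩ = ⟨k-1, by omega⟩ :=
        swap_apply_of_ne_of_ne (by simp <;> omega) (by simp <;> omega)
      have t2 : swap (⟨k-1, by omega⟩ : Fin n) ⟨k, by omega⟩ ⟨k+1, by omega⟩ = ⟨k+1, by omega⟩ :=
        swap_apply_of_ne_of_ne (by simp <;> omega) (by simp)
      rw [Perm.mul_apply, Perm.mul_apply, t1, swap_apply_left, swap_apply_left, t2] at h3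
      have h' : L ⟨k, by omega⟩ ⟨k+1, by omega⟩ = rho n (k+1) * (sigma n (k+1))⁻¹ := h
      rw [h'] at h3
      obtain ⟨-, r2, r3, -, -⟩ := rel_adj (n := n) (k := k) h1 (by omega)
      have e1 : rho n (k+1) = (rho n k * rho n (k+1)) * rho n k * (rho n k * rho n (k+1))⁻¹ := by
        rw [r2]; group
      have e2 : sigma n (k+1) = (rho n k * rho n (k+1)) * sigma n k *
          (rho n k * rho n (k+1))⁻¹ := by
        rw [r3]; group
      generalize hu : rho n k * rho n (k+1) = u at *
      rw [e1, e2] at h3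
      have h4 : u * L ⟨k-1, by omega⟩ ⟨k, by omega⟩ * u⁻¹ =
          u * (rho n k * (sigma n k)⁻¹) * u⁻¹ := by
        rw [h3]; group
      exact mul_left_cancel (mul_right_cancel h4)
  intro k h1 h2
  exact hdown (n - 1 - k) k (by omega) h1 h2

namespace Good
variable {n : ℕ} {ι : UVB n →* Perm (Fin n)} {s : Perm (Fin n) →* UVB n}
  {L : Fin n → Fin n → UVB n}

lemma push (G : Good n ι s L) (π : Perm (Fin n)) {i j : Fin n} (h : i ≠ j) :
    s π * L i j = L (π i) (π j) * s π := by
  rw [← G.conj π i j h]; group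

lemma comm_of_conj (G : Good n ι s L) (τ : Perm (Fin n)) {a b c d : Fin n} (h : a ≠ b) (h' : c ≠ d)
    (H : Commute (L a b) (L c d)) : Commute (L (τ a) (τ b)) (L (τ c) (τ d)) := by
  rw [← G.conj τ a b h, ← G.conj τ c d h']
  exact Commute.conj H _

lemma sigma_eq (G : Good n ι s L) (k : ℕ) (h1 : 1 ≤ k) (h2 : k ≤ n - 1) :
    sigma n k = (L ⟨k - 1, by omega⟩ ⟨k, by omega⟩)⁻¹ * rho n k := by
  rw [G.adj k h1 h2]; simp

/-- Commutation inside the first three strands. -/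
lemma comm3 (G : Good n ι s L) (hn : 3 ≤ n) :
    Commute (L ⟨0, by omega⟩ ⟨2, by omega⟩) (L ⟨1, by omega⟩ ⟨2, by omega⟩) ∧
    Commute (L ⟨0, by omega⟩ ⟨1, by omega⟩) (L ⟨0, by omega⟩ ⟨2, by omega⟩) ∧
    Commute (L ⟨0, by omega⟩ ⟨1, by omega⟩) (L ⟨1, by omega⟩ ⟨2, by omega⟩) := by
  obtain ⟨r1, r2, -, r4, r5⟩ := rel_adj (n := n) (k := 1) le_rfl (by omega)
  have s1 := G.sigma_eq 1 (by omega) (by omega)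
  have s2 := G.sigma_eq 2 (by omega) (by omega)
  have c1 := G.sec 1 (by omega) (by omega)
  have c2 := G.sec 2 (by omega) (by omega)
  simp only [Nat.sub_self, Nat.reduceSub, Nat.reduceAdd] at *
  have q1 := rho_sq n 1
  have q2 := rho_sq n 2
  have x0 : (⟨0, by omega⟩ : Fin n) ≠ ⟨1, by omega⟩ := by simp
  have x1 : (⟨1, by omega⟩ : Fin n) ≠ ⟨2, by omega⟩ := by simp
  have x2 : (⟨0, by omega⟩ : Fin n) ≠ ⟨2, by omega⟩ := by simp
  -- ρ₁ L₁₂ = L₀₂ ρ₁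
  have p1 := G.push (swap ⟨0, by omega⟩ ⟨1, by omega⟩) x1
  have p2 := G.push (swap ⟨1, by omega⟩ ⟨2, by omega⟩) x0
  have p3 := G.push (swap ⟨0, by omega⟩ ⟨1, by omega⟩) x2
  have p4 := G.push (swap ⟨1, by omega⟩ ⟨2, by omega⟩) x2
  rw [c1, swap_apply_right, swap_apply_of_ne_of_ne x2.symm x1.symm] at p1
  rw [c2, swap_apply_left, swap_apply_of_ne_of_ne x0 x2] at p2
  rw [c1, swap_apply_left, swap_apply_of_ne_of_ne x2.symm x1.symm] at p3
  rw [c2, swap_apply_right, swap_apply_of_ne_of_ne x0 x2] at p4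
  generalize L ⟨0, by omega⟩ ⟨1, by omega⟩ = A at *
  generalize L ⟨0, by omega⟩ ⟨2, by omega⟩ = B at *
  generalize L ⟨1, by omega⟩ ⟨2, by omega⟩ = C at *
  generalize rho n 1 = u at *
  generalize rho n 2 = v at *
  have inv_push : ∀ {w X Y : UVB n}, w * X = Y * w → w * X⁻¹ = Y⁻¹ * w := by
    intro w X Y h
    calc w * X⁻¹ = Y⁻¹ * (Y * w) * X⁻¹ := by group
      _ = _ := by rw [← h]; group
  replace p1 := inv_push p1
  replace p2 := inv_push p2
  replace p3 := inv_push p3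
  replace p4 := inv_push p4
  rw [s1, s2] at r1 r4 r5
  generalize hA : A⁻¹ = a at *
  generalize hB : B⁻¹ = b at *
  generalize hC : C⁻¹ = c at *
  -- normal forms
  have e4 : b * c = c * b := by
    have h1 : u * (c * v) * (a * u) = b * c * (u * v * u) := by
      calc u * (c * v) * (a * u) = (u * c) * (v * a) * u := by group
        _ = b * (u * b) * v * u := by rw [p1, p2]; group
        _ = _ := by rw [p3]; group
    have h2 : c * v * (a * u) * v = c * b * (v * u * v) := by
      calc c * v * (a * u) * v = c * (v * a) * u * v := by group
        _ = _ := by rw [p2]; group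
    rw [h1, h2, ← r2] at r4
    exact mul_right_cancel r4
  have e5 : b * a = a * b := by
    have h1 : v * (a * u) * (c * v) = b * a * (v * u * v) := by
      calc v * (a * u) * (c * v) = (v * a) * (u * c) * v := by group
        _ = b * (v * b) * u * v := by rw [p1, p2]; group
        _ = _ := by rw [p4]; group
    have h2 : a * u * (c * v) * u = a * b * (u * v * u) := by
      calc a * u * (c * v) * u = a * (u * c) * v * u := by group
        _ = _ := by rw [p1]; group
    rw [h1, h2, ← r2] at r5
    exact mul_right_cancel r5
  have e1 : a * c = c * a := by
    have h1 : a * u * (c * v) * (a * u) = a * b * c * (u * v * u) := by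
      calc a * u * (c * v) * (a * u) = a * (u * c) * (v * a) * u := by group
        _ = a * b * (u * b) * v * u := by rw [p1, p2]; group
        _ = _ := by rw [p3]; group
    have h2 : c * v * (a * u) * (c * v) = c * b * a * (v * u * v) := by
      calc c * v * (a * u) * (c * v) = c * (v * a) * (u * c) * v := by group
        _ = c * b * (v * b) * u * v := by rw [p1, p2]; group
        _ = _ := by rw [p4]; group
    rw [h1, h2, ← r2] at r1
    have h3 := mul_right_cancel r1
    rw [← e5, ← e4, mul_assoc, mul_assoc] at h3
    exact mul_left_cancel h3
  refine ⟨?_, ?_, ?_⟩ <;> rw [← Commute.inv_inv_iff]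
  · rw [hB, hC]; exact e4
  · rw [hB, hA]; exact e5.symm
  · rw [hC, hA]; exact e1

lemma comm_disj (G : Good n ι s L) {i j k l : Fin n} (hij : i ≠ j) (hik : i ≠ k) (hil : i ≠ l)
    (hjk : j ≠ k) (hjl : j ≠ l) (hkl : k ≠ l) : Commute (L i j) (L k l) := by
  have hinj : Function.Injective ![i, j, k, l] := by
    intro x y; fin_cases x <;> fin_cases y <;>
      simp [hij, hij.symm, hik, hik.symm, hil, hil.symm, hjk, hjk.symm, hjl, hjl.symm, hkl,
        hkl.symm]
  have hn : 4 ≤ n := by simpa using Fintype.card_le_of_injective _ hinj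
  obtain ⟨τ, hτ⟩ := exists_perm (fun x : Fin 4 => (⟨x.val, by omega⟩ : Fin n)) ![i, j, k, l]
    (by intro x y h; simpa [Fin.ext_iff] using h) hinj
  have h0 := hτ 0
  have h1 := hτ 1
  have h2 := hτ 2
  have h3 := hτ 3
  simp at h0 h1 h2 h3
  rw [← h0, ← h1, ← h2, ← h3]
  apply G.comm_of_conj τ (by simp) (by simp)
  have a1 := G.adj 1 (by omega) (by omega)
  have a3 := G.adj 3 (by omega) (by omega)
  simp only [Nat.sub_self, Nat.reduceSub] at a1 a3
  rw [a1, a3]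
  obtain ⟨b1, b2, b3⟩ := rel_far (n := n) (k := 1) (l := 3) (by omega)
  obtain ⟨-, -, b4⟩ := rel_far (n := n) (k := 3) (l := 1) (by omega)
  exact (b2.mul_right b4.symm.inv_right).mul_left (b3.mul_right b1.inv_right).inv_left

lemma comm_share (G : Good n ι s L) {i j k : Fin n} (hij : i ≠ j) (hik : i ≠ k) (hjk : j ≠ k) :
    Commute (L i k) (L j k) ∧ Commute (L i j) (L i k) ∧ Commute (L i j) (L j k) := by
  have hinj : Function.Injective ![i, j, k] := by
    intro x y; fin_cases x <;> fin_cases y <;>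
      simp [hij, hij.symm, hik, hik.symm, hjk, hjk.symm]
  have hn : 3 ≤ n := by simpa using Fintype.card_le_of_injective _ hinj
  obtain ⟨τ, hτ⟩ := exists_perm (fun x : Fin 3 => (⟨x.val, by omega⟩ : Fin n)) ![i, j, k]
    (by intro x y h; simpa [Fin.ext_iff] using h) hinj
  have h0 := hτ 0
  have h1 := hτ 1
  have h2 := hτ 2
  simp at h0 h1 h2
  rw [← h0, ← h1, ← h2]
  obtain ⟨c1, c2, c3⟩ := G.comm3 hn
  exact ⟨G.comm_of_conj τ (by simp) (by simp) c1, G.comm_of_conj τ (by simp) (by simp) c2,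
    G.comm_of_conj τ (by simp) (by simp) c3⟩

lemma comm (G : Good n ι s L) {i j k l : Fin n} (hij : i ≠ j) (hkl : k ≠ l)
    (h : s(i, j) ≠ s(k, l)) : Commute (L i j) (L k l) := by
  simp only [ne_eq, Sym2.eq_iff, not_or, not_and] at h
  by_cases hik : i = k
  · subst hik
    exact (G.comm_share hij hkl (h.1 rfl)).2.1
  by_cases hjl : j = l
  · subst hjl
    exact (G.comm_share hik hij hkl).1
  by_cases hil : i = l
  · subst hil
    exact (G.comm_share hkl (fun e => h.2 rfl e.symm) hij).2.2.symm
  by_cases hjk : j = k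
  · subst hjk
    exact (G.comm_share hij hil hjl).2.2
  exact G.comm_disj hij hik hil hjk hjl hkl

end Good
end UVBProof

namespace UVBProof
open Equiv UVB

/-- Subgroup generated by the pure generators supported on pairs in `A`. -/
def P {n : ℕ} (L : Fin n → Fin n → UVB n) (A : Set (Sym2 (Fin n))) : Subgroup (UVB n) :=
  Subgroup.closure {x | ∃ i j, i ≠ j ∧ s(i, j) ∈ A ∧ x = L i j}

lemma P_mono {n : ℕ} {L : Fin n → Fin n → UVB n} {A B : Set (Sym2 (Fin n))} (h : A ⊆ B) :
    P L A ≤ P L B := by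
  apply Subgroup.closure_mono
  rintro x ⟨i, j, hij, hA, rfl⟩
  exact ⟨i, j, hij, h hA, rfl⟩

lemma L_mem_P {n : ℕ} {L : Fin n → Fin n → UVB n} {A : Set (Sym2 (Fin n))} {i j : Fin n}
    (hij : i ≠ j) (h : s(i, j) ∈ A) : L i j ∈ P L A :=
  Subgroup.subset_closure ⟨i, j, hij, h, rfl⟩

lemma _root_.Markov.refl' (x : Σ n, UVB n) : Markov x x := Relation.EqvGen.refl x
lemma _root_.Markov.symm' {x y : Σ n, UVB n} (h : Markov x y) : Markov y x := Relation.EqvGen.symm _ _ h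
lemma _root_.Markov.trans' {x y z : Σ n, UVB n} (h : Markov x y) (h' : Markov y z) : Markov x z :=
  Relation.EqvGen.trans _ _ _ h h'

lemma markov_rot {n : ℕ} (p q u : UVB n) : Markov ⟨n, p * q * u⟩ ⟨n, (u⁻¹ * q * u) * p * u⟩ := by
  have := Relation.EqvGen.rel _ _ (MarkovBase.conj n (p * q * u) (u⁻¹ * q * u))
  rw [show u⁻¹ * q * u * (p * q * u) * (u⁻¹ * q * u)⁻¹ = (u⁻¹ * q * u) * p * u by group] at this
  exact this

namespace Good
variable {n : ℕ} {ι : UVB n →* Perm (Fin n)} {s : Perm (Fin n) →* UVB n}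
  {L : Fin n → Fin n → UVB n}

lemma comm_P_L (G : Good n ι s L) {A : Set (Sym2 (Fin n))} {x : UVB n} (hx : x ∈ P L A)
    {i j : Fin n} (hij : i ≠ j) (h : s(i, j) ∉ A) : Commute x (L i j) := by
  induction hx using Subgroup.closure_induction with
  | mem x hx =>
    obtain ⟨k, l, hkl, hA, rfl⟩ := hx
    exact G.comm hkl hij (fun e => h (e ▸ hA))
  | one => simp
  | mul x y _ _ hx hy => exact hx.mul_left hy
  | inv x _ hx => exact hx.inv_left

lemma comm_P (G : Good n ι s L) {A B : Set (Sym2 (Fin n))} {x y : UVB n} (hx : x ∈ P L A)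
    (hy : y ∈ P L B) (h : ∀ e ∈ B, e ∉ A) : Commute x y := by
  induction hy using Subgroup.closure_induction with
  | mem y hy =>
    obtain ⟨k, l, hkl, hA, rfl⟩ := hy
    exact G.comm_P_L hx hkl (h _ hA)
  | one => simp
  | mul x y _ _ hx hy => exact hx.mul_right hy
  | inv x _ hx => exact hx.inv_right

lemma split_P (G : Good n ι s L) {A B C : Set (Sym2 (Fin n))} {x : UVB n} (hx : x ∈ P L C)
    (h : ∀ e ∈ B, e ∉ A) (hC : C ⊆ A ∪ B) : ∃ y ∈ P L A, ∃ z ∈ P L B, x = y * z := by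
  induction hx using Subgroup.closure_induction with
  | mem x hx =>
    obtain ⟨k, l, hkl, hA, rfl⟩ := hx
    rcases hC hA with h | h
    · exact ⟨_, L_mem_P hkl h, 1, one_mem _, by simp⟩
    · exact ⟨1, one_mem _, _, L_mem_P hkl h, by simp⟩
  | one => exact ⟨1, one_mem _, 1, one_mem _, by simp⟩
  | mul x y _ _ hx hy =>
    obtain ⟨a, ha, b, hb, rfl⟩ := hx
    obtain ⟨c, hc, d, hd, rfl⟩ := hy
    refine ⟨a * c, mul_mem ha hc, b * d, mul_mem hb hd, ?_⟩
    have := (G.comm_P hc hb h).eq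
    calc a * b * (c * d) = a * (b * c) * d := by group
      _ = _ := by rw [← this]; group
  | inv x _ hx =>
    obtain ⟨a, ha, b, hb, rfl⟩ := hx
    refine ⟨a⁻¹, inv_mem ha, b⁻¹, inv_mem hb, ?_⟩
    rw [(G.comm_P ha hb h).eq]; group

lemma conj_P (G : Good n ι s L) {A B : Set (Sym2 (Fin n))} (π : Perm (Fin n))
    (h : ∀ i j, i ≠ j → s(i, j) ∈ A → s(π i, π j) ∈ B) {x : UVB n} (hx : x ∈ P L A) :
    s π * x * (s π)⁻¹ ∈ P L B := by
  induction hx using Subgroup.closure_induction with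
  | mem x hx =>
    obtain ⟨k, l, hkl, hA, rfl⟩ := hx
    rw [G.conj π k l hkl]
    exact L_mem_P (π.injective.ne hkl) (h k l hkl hA)
  | one => simp
  | mul x y _ _ hx hy =>
    have := mul_mem hx hy
    convert this using 1
    group
  | inv x _ hx =>
    have := inv_mem hx
    convert this using 1
    group

/-- backward shift of a block of pure generators. -/
lemma shift_P (G : Good n ι s L) {A B B' : Set (Sym2 (Fin n))} (π : Perm (Fin n)) {p q : UVB n}
    (h : ∀ i j, i ≠ j → s(π i, π j) ∈ B → s(i, j) ∈ B')
    (hp : p ∈ P L A) (hq : q ∈ P L B) : ∃ r ∈ P L (A ∪ B'),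
      Markov ⟨n, p * q * s π⟩ ⟨n, r * s π⟩ := by
  have hq' : (s π)⁻¹ * q * s π ∈ P L B' := by
    have := G.conj_P (B := B') π⁻¹ (fun i j hij hB => by
      apply h _ _ (π⁻¹.injective.ne hij)
      simpa using hB) hq
    simpa using this
  exact ⟨_, mul_mem (P_mono Set.subset_union_right hq') (P_mono Set.subset_union_left hp),
    markov_rot p q (s π)⟩

lemma shift_L (G : Good n ι s L) (π : Perm (Fin n)) {i j i' j' : Fin n} (hij : i ≠ j)
    (hi : π i = i') (hj : π j = j') (z : ℤ) {t : UVB n} (h : Commute t (L i j)) :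
    Markov ⟨n, t * (L i' j') ^ z * s π⟩ ⟨n, t * (L i j) ^ z * s π⟩ := by
  have h1 := markov_rot t ((L i' j') ^ z) (s π)
  have h2 : (s π)⁻¹ * (L i' j') ^ z * s π = (L i j) ^ z := by
    subst hi hj
    rw [← G.conj π i j hij, conj_zpow]
    group
  rw [h2, ← (h.zpow_right z).eq] at h1
  exact h1

lemma decomp (G : Good n ι s L) (α : UVB n) : ∃ p ∈ P L Set.univ, ∃ π, α = p * s π := by
  have hα : α ∈ Subgroup.closure (Set.range (PresentedGroup.of (rels := uvbRels n))) := by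
    rw [PresentedGroup.closure_range_of]; trivial
  have hmul : ∀ (x y : UVB n), (∃ p ∈ P L Set.univ, ∃ π, x = p * s π) →
      (∃ p ∈ P L Set.univ, ∃ π, y = p * s π) → ∃ p ∈ P L Set.univ, ∃ π, x * y = p * s π := by
    rintro x y ⟨p, hp, π, rfl⟩ ⟨q, hq, τ, rfl⟩
    refine ⟨p * (s π * q * (s π)⁻¹), mul_mem hp (G.conj_P π (by simp) hq), π * τ, ?_⟩
    rw [map_mul]; group
  induction hα using Subgroup.closure_induction with
  | mem x hx =>
    obtain ⟨g, rfl⟩ := hx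
    rcases g with i | i
    · have hi := i.isLt
      rw [sigma_of, G.sigma_eq (i.val+1) (by omega) (by omega), ← G.sec (i.val+1) (by omega)
        (by omega)]
      exact ⟨_, inv_mem (L_mem_P (by simp) trivial), _, rfl⟩
    · have hi := i.isLt
      rw [rho_of, ← G.sec (i.val+1) (by omega) (by omega)]
      exact ⟨1, one_mem _, _, (one_mul _).symm⟩
  | one => exact ⟨1, one_mem _, 1, by simp⟩
  | mul x y _ _ hx hy => exact hmul x y hx hy
  | inv x _ hx =>
    obtain ⟨p, hp, π, rfl⟩ := hx
    refine ⟨s π⁻¹ * p⁻¹ * (s π⁻¹)⁻¹, G.conj_P _ (by simp) (inv_mem hp), π⁻¹, ?_⟩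
    rw [map_inv]; group

lemma iota_L (G : Good n ι s L) {i j : Fin n} (hij : i ≠ j) : ι (L i j) = 1 := by
  have hn : 2 ≤ n := by
    have := i.isLt; have := j.isLt
    have : i.val ≠ j.val := fun h => hij (Fin.ext h)
    omega
  obtain ⟨τ, h1, h2⟩ := exists_perm2 (a := (⟨1 - 1, by omega⟩ : Fin n)) (b := ⟨1, by omega⟩)
    (by simp) hij
  rw [← h1, ← h2, ← G.conj τ _ _ (by simp), G.adj 1 le_rfl (by omega)]
  simp only [map_mul, map_inv]
  rw [(G.iota 1 le_rfl (by omega)).1, (G.iota 1 le_rfl (by omega)).2]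
  simp

lemma iota_P (G : Good n ι s L) {A : Set (Sym2 (Fin n))} {x : UVB n} (hx : x ∈ P L A) :
    ι x = 1 := by
  induction hx using Subgroup.closure_induction with
  | mem x hx =>
    obtain ⟨k, l, hkl, hA, rfl⟩ := hx
    exact G.iota_L hkl
  | one => simp
  | mul x y _ _ hx hy => rw [map_mul, hx, hy, one_mul]
  | inv x _ hx => rw [map_inv, hx, inv_one]

lemma sec_last {m : ℕ} {ι : UVB (m+2) →* Perm (Fin (m+2))} {s : Perm (Fin (m+2)) →* UVB (m+2)}
    {L : Fin (m+2) → Fin (m+2) → UVB (m+2)} (G : Good (m+2) ι s L) :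
    s (swap (Fin.last m).castSucc (Fin.last (m+1))) = rho (m+2) (m+1) :=
  G.sec (m+1) (by omega) (by omega)

lemma adj_last {m : ℕ} {ι : UVB (m+2) →* Perm (Fin (m+2))} {s : Perm (Fin (m+2)) →* UVB (m+2)}
    {L : Fin (m+2) → Fin (m+2) → UVB (m+2)} (G : Good (m+2) ι s L) :
    L (Fin.last m).castSucc (Fin.last (m+1)) = rho (m+2) (m+1) * (sigma (m+2) (m+1))⁻¹ :=
  G.adj (m+1) (by omega) (by omega)

end Good

/-- `Fin n` as the initial segment of `Fin (n+1)`. -/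
def initEquiv (n : ℕ) : Fin n ≃ {x : Fin (n+1) // x.val < n} where
  toFun i := ⟨i.castSucc, i.isLt⟩
  invFun x := ⟨x.1.val, x.2⟩
  left_inv _ := rfl
  right_inv _ := rfl

/-- Extension of permutations fixing the last point. -/
def ext (n : ℕ) : Perm (Fin n) →* Perm (Fin (n+1)) := Perm.extendDomainHom (initEquiv n)

lemma ext_castSucc {n : ℕ} (π : Perm (Fin n)) (i : Fin n) : ext n π i.castSucc = (π i).castSucc :=
  Perm.extendDomain_apply_image π (initEquiv n) i

lemma ext_last {n : ℕ} (π : Perm (Fin n)) : ext n π (Fin.last n) = Fin.last n :=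
  Perm.extendDomain_apply_not_subtype π (initEquiv n) (by simp)

lemma ext_swap {n : ℕ} (i j : Fin n) : ext n (swap i j) = swap i.castSucc j.castSucc := by
  ext x
  induction x using Fin.lastCases with
  | last =>
    rw [ext_last, swap_apply_of_ne_of_ne (Fin.castSucc_lt_last i).ne' (Fin.castSucc_lt_last j).ne']
  | cast x =>
    rw [ext_castSucc, swap_apply_def, swap_apply_def]
    simp only [Fin.castSucc_inj]
    split_ifs <;> rfl

lemma exists_ext {n : ℕ} (π : Perm (Fin (n+1))) (h : π (Fin.last n) = Fin.last n) :
    ∃ π₀, π = ext n π₀ := by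
  have hlt : ∀ x : Fin (n+1), (π x).val < n ↔ x.val < n := by
    intro x
    have h1 : ∀ y : Fin (n+1), y.val < n ↔ y ≠ Fin.last n := by
      intro y; rw [← Fin.lt_last_iff_ne_last]; rfl
    rw [h1, h1, not_iff_not]
    constructor
    · intro hx; exact π.injective (hx.trans h.symm)
    · rintro rfl; exact h
  refine ⟨(initEquiv n).symm.permCongr (π.subtypePerm hlt), ?_⟩
  ext x
  induction x using Fin.lastCases with
  | last => rw [ext_last, h]
  | cast x => rw [ext_castSucc]; rfl

section incl
variable {n : ℕ} {ι : UVB n →* Perm (Fin n)} {s : Perm (Fin n) →* UVB n}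
  {L : Fin n → Fin n → UVB n}
  {ι' : UVB (n+1) →* Perm (Fin (n+1))} {s' : Perm (Fin (n+1)) →* UVB (n+1)}
  {L' : Fin (n+1) → Fin (n+1) → UVB (n+1)}

lemma incl_s (G : Good n ι s L) (G' : Good (n+1) ι' s' L') (π : Perm (Fin n)) :
    incl n (s π) = s' (ext n π) := by
  have : ((incl n).comp s).eqLocus (s'.comp (ext n)) = ⊤ := by
    apply perm_adj_induction
    intro k h1 h2
    show incl n (s _) = s' (ext n _)
    rw [G.sec k h1 h2, incl_rho h2, ext_swap]
    exact (G'.sec k h1 (by omega)).symm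
  have h : π ∈ ((incl n).comp s).eqLocus (s'.comp (ext n)) := by rw [this]; trivial
  exact h

lemma incl_L (G : Good n ι s L) (G' : Good (n+1) ι' s' L') {i j : Fin n} (hij : i ≠ j) :
    incl n (L i j) = L' i.castSucc j.castSucc := by
  have hn : 2 ≤ n := by
    have := i.isLt; have := j.isLt
    have : i.val ≠ j.val := fun h => hij (Fin.ext h)
    omega
  obtain ⟨τ, h1, h2⟩ := exists_perm2 (a := (⟨1 - 1, by omega⟩ : Fin n)) (b := ⟨1, by omega⟩)
    (by simp) hij
  rw [← h1, ← h2, ← G.conj τ _ _ (by simp), G.adj 1 le_rfl (by omega), map_mul, map_mul, map_mul,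
    map_inv, map_inv, incl_s G G', incl_sigma (by omega), incl_rho (by omega), ← ext_castSucc,
    ← ext_castSucc, ← G'.conj _ _ _ (by simp)]
  rw [← G'.adj 1 le_rfl (by omega)]
  rfl

lemma incl_P (G : Good n ι s L) (G' : Good (n+1) ι' s' L') {A : Set (Sym2 (Fin n))}
    {B : Set (Sym2 (Fin (n+1)))}
    (h : ∀ i j, i ≠ j → s(i, j) ∈ A → s(i.castSucc, j.castSucc) ∈ B) {x : UVB n}
    (hx : x ∈ P L A) : incl n x ∈ P L' B := by
  induction hx using Subgroup.closure_induction with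
  | mem x hx =>
    obtain ⟨k, l, hkl, hA, rfl⟩ := hx
    rw [incl_L G G' hkl]
    exact L_mem_P (by simpa using hkl) (h k l hkl hA)
  | one => simp
  | mul x y _ _ hx hy => rw [map_mul]; exact mul_mem hx hy
  | inv x _ hx => rw [map_inv]; exact inv_mem hx

lemma lift_P (G : Good n ι s L) (G' : Good (n+1) ι' s' L') {x : UVB (n+1)}
    (hx : x ∈ P L' {e | Fin.last n ∉ e}) : ∃ y ∈ P L Set.univ, incl n y = x := by
  induction hx using Subgroup.closure_induction with
  | mem x hx =>
    obtain ⟨k, l, hkl, hA, rfl⟩ := hx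
    simp only [Set.mem_ofPred_eq, Sym2.mem_iff, not_or] at hA
    obtain ⟨k', rfl⟩ := Fin.exists_castSucc_eq.mpr (Ne.symm hA.1)
    obtain ⟨l', rfl⟩ := Fin.exists_castSucc_eq.mpr (Ne.symm hA.2)
    have hkl' : k' ≠ l' := by simpa using hkl
    exact ⟨L k' l', L_mem_P hkl' trivial, incl_L G G' hkl'⟩
  | one => exact ⟨1, one_mem _, map_one _⟩
  | mul x y _ _ hx hy =>
    obtain ⟨a, ha, rfl⟩ := hx
    obtain ⟨b, hb, rfl⟩ := hy
    exact ⟨a * b, mul_mem ha hb, map_mul _ _ _⟩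
  | inv x _ hx =>
    obtain ⟨a, ha, rfl⟩ := hx
    exact ⟨a⁻¹, inv_mem ha, map_inv _ _⟩

end incl

section count

lemma numOrbits_eq {n : ℕ} (π : Perm (Fin n)) :
    numOrbits π + π.support.card = n + π.cycleType.card := by
  have h : (Finset.univ.filter fun x => π x = x).card + π.support.card = n := by
    have := Finset.card_filter_add_card_filter_not (s := (Finset.univ : Finset (Fin n)))
      (fun x => π x = x)
    rw [Finset.card_univ, Fintype.card_fin] at this
    exact this
  unfold numOrbits
  omega

lemma numOrbits_one (n : ℕ) : numOrbits (1 : Perm (Fin n)) = n := by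
  have := numOrbits_eq (1 : Perm (Fin n))
  simpa using this

lemma numOrbits_conj {n : ℕ} (π τ : Perm (Fin n)) : numOrbits (τ * π * τ⁻¹) = numOrbits π := by
  have h1 := numOrbits_eq π
  have h2 := numOrbits_eq (τ * π * τ⁻¹)
  rw [Perm.cycleType_conj, Perm.card_support_conj] at h2
  omega

lemma numOrbits_ext {n : ℕ} (π : Perm (Fin n)) : numOrbits (ext n π) = numOrbits π + 1 := by
  have h1 := numOrbits_eq π
  have h2 := numOrbits_eq (ext n π)
  have h3 : (ext n π).cycleType = π.cycleType := Perm.cycleType_extendDomain (initEquiv n)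
  have h4 : (ext n π).support.card = π.support.card := by
    rw [← Perm.sum_cycleType, ← Perm.sum_cycleType, h3]
  rw [h3, h4] at h2
  omega

/-- Cutting the point `π x` out of a nontrivial cycle increases the number of orbits by one. -/
lemma numOrbits_swap {n : ℕ} (π : Perm (Fin n)) (x : Fin n) (hx : π x ≠ x) :
    numOrbits (swap x (π x) * π) = numOrbits π + 1 := by
  set c := π.cycleOf x with hc
  have hcyc : c.IsCycle := Perm.isCycle_cycleOf π hx
  have hcx : c x = π x := Perm.cycleOf_apply_self π x
  have hmem : c ∈ π.cycleFactorsFinset := by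
    rw [hc, Perm.cycleOf_mem_cycleFactorsFinset_iff, Perm.mem_support]; exact hx
  have hdis := Perm.disjoint_mul_inv_of_mem_cycleFactorsFinset hmem
  obtain ⟨d, hd⟩ : ∃ d, d = π * c⁻¹ := ⟨_, rfl⟩
  rw [← hd] at hdis
  have hπ : π = d * c := by rw [hd]; group
  have hcomm := hdis.commute
  have hπ' : π = c * d := hπ.trans hcomm.eq
  have hdc : c.Disjoint d := hdis.symm
  have hsupp : (swap x (c x) * c).support ⊆ c.support := by
    intro y hy
    rw [Perm.mem_support] at hy ⊢
    intro hcy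
    apply hy
    rw [Perm.mul_apply, hcy]
    apply swap_apply_of_ne_of_ne
    · rintro rfl; rw [hcx] at hcy; exact hx hcy
    · intro e
      rw [e] at hcy
      exact hx (by rw [← hcx]; exact c.injective hcy)
  have hdis2 : (swap x (c x) * c).Disjoint d := by
    rw [Perm.disjoint_iff_disjoint_support] at hdc ⊢
    exact hdc.mono_left hsupp
  have e1 : swap x (π x) * π = (swap x (c x) * c) * d := by rw [hcx, mul_assoc, ← hπ']
  have h1 := numOrbits_eq π
  have h2 := numOrbits_eq (swap x (π x) * π)
  rw [e1] at h2 ⊢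
  rw [hdis2.cycleType_mul, hdis2.card_support_mul, Multiset.card_add] at h2
  have h3 : π.cycleType.card = 1 + d.cycleType.card := by
    rw [hπ', hdc.cycleType_mul, Multiset.card_add, hcyc.cycleType]; rfl
  have h4 : π.support.card = c.support.card + d.support.card := by
    rw [hπ', hdc.card_support_mul]
  by_cases h : c (c x) = x
  · have hs : c = swap x (c x) := hcyc.eq_swap_of_apply_apply_eq_self (by rw [hcx]; exact hx) h
    have h5 : swap x (c x) * c = 1 := by
      conv_lhs => rw [hs]
      rw [swap_apply_left, swap_mul_self]
    have h6 : c.support.card = 2 := by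
      rw [hs]; exact Perm.card_support_swap (by rw [hcx]; exact hx.symm)
    rw [h5] at h2 ⊢
    simp at h2 ⊢
    omega
  · have h5 := hcyc.swap_mul (by rw [hcx]; exact hx) h
    have h6 : (swap x (c x) * c).support.card + 1 = c.support.card := by
      have hs : (swap x (c x) * c).support = c.support \ {x} :=
        Perm.support_swap_mul_eq c x h
      rw [hs, Finset.card_sdiff_of_subset (by simpa [Perm.mem_support, hcx] using hx)]
      have : 0 < c.support.card := Finset.card_pos.mpr ⟨x, by simpa [hcx] using hx⟩
      simp
      omega
    rw [h5.cycleType] at h2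
    simp only [Multiset.card_singleton] at h2
    omega

lemma numOrbits_stab {m : ℕ} (π : Perm (Fin (m+1))) :
    numOrbits (ext (m+1) π * swap (Fin.last m).castSucc (Fin.last (m+1))) = numOrbits π := by
  set τ := swap (Fin.last m).castSucc (Fin.last (m+1)) with hτ
  set ψ := ext (m+1) π * τ with hψ
  have h1 : ψ (Fin.last m).castSucc = Fin.last (m+1) := by
    rw [hψ, hτ, Perm.mul_apply, swap_apply_left, ext_last]
  have h2 := numOrbits_swap ψ (Fin.last m).castSucc
    (by rw [h1]; exact (Fin.castSucc_lt_last _).ne')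
  rw [h1] at h2
  have h3 : τ * ψ = τ * ext (m+1) π * τ⁻¹ := by
    rw [hψ, ← mul_assoc]; simp [hτ]
  rw [← hτ, h3, numOrbits_conj, numOrbits_ext] at h2
  omega

end count

end UVBProof

namespace UVBProof
open Equiv UVB

section main
variable {m : ℕ}

/-- Virtual stabilization in terms of the pure/permutation decomposition. -/
lemma stab_virt {n : ℕ} {ι : UVB (n+1) →* Perm (Fin (n+1))} {s : Perm (Fin (n+1)) →* UVB (n+1)}
    {L : Fin (n+1) → Fin (n+1) → UVB (n+1)}
    {ι' : UVB (n+2) →* Perm (Fin (n+2))} {s' : Perm (Fin (n+2)) →* UVB (n+2)}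
    {L' : Fin (n+2) → Fin (n+2) → UVB (n+2)}
    (G : Good (n+1) ι s L) (G' : Good (n+2) ι' s' L') (t : UVB (n+1)) (π : Perm (Fin (n+1))) :
    Markov ⟨n+1, t * s π⟩
      ⟨n+2, incl (n+1) t * s' (ext (n+1) π * swap (Fin.last n).castSucc (Fin.last (n+1)))⟩ := by
  have h := Relation.EqvGen.rel _ _ (MarkovBase.stabVirt (n+1) (t * s π))
  rw [map_mul, incl_s G G', ← G'.sec_last, mul_assoc, ← map_mul] at h
  exact h

/-- Classical stabilizations in terms of the pure/permutation decomposition. -/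
lemma stab_class {n : ℕ} {ι : UVB (n+1) →* Perm (Fin (n+1))} {s : Perm (Fin (n+1)) →* UVB (n+1)}
    {L : Fin (n+1) → Fin (n+1) → UVB (n+1)}
    {ι' : UVB (n+2) →* Perm (Fin (n+2))} {s' : Perm (Fin (n+2)) →* UVB (n+2)}
    {L' : Fin (n+2) → Fin (n+2) → UVB (n+2)}
    (G : Good (n+1) ι s L) (G' : Good (n+2) ι' s' L') (t : UVB (n+1)) (π : Perm (Fin (n+1)))
    {b : Fin (n+1)} (hb : π (Fin.last n) = b) :
    Markov ⟨n+1, t * s π⟩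
      ⟨n+2, incl (n+1) t * L' (Fin.last (n+1)) b.castSucc *
        s' (ext (n+1) π * swap (Fin.last n).castSucc (Fin.last (n+1)))⟩ ∧
    Markov ⟨n+1, t * s π⟩
      ⟨n+2, incl (n+1) t * (L' b.castSucc (Fin.last (n+1)))⁻¹ *
        s' (ext (n+1) π * swap (Fin.last n).castSucc (Fin.last (n+1)))⟩ := by
  have hne : (Fin.last n).castSucc ≠ Fin.last (n+1) := (Fin.castSucc_lt_last _).ne
  have a1 := G'.adj_last
  have a2 := G'.push (swap (Fin.last n).castSucc (Fin.last (n+1))) hne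
  rw [swap_apply_left, swap_apply_right, G'.sec_last, a1] at a2
  have q := rho_sq (n+2) (n+1)
  -- pushes through the permutation
  have p1 := G'.push (ext (n+1) π) hne.symm
  have p2 := G'.push (ext (n+1) π) hne
  rw [ext_last, ext_castSucc, hb] at p1 p2
  rw [a1] at p2
  rw [← mul_assoc, q, one_mul] at a2
  constructor
  · have h := Relation.EqvGen.rel _ _ (MarkovBase.stabNeg (n+1) (t * s π))
    rw [map_mul, incl_s G G', a2] at h
    rw [map_mul, G'.sec_last]
    have e : incl (n+1) t * L' (Fin.last (n+1)) b.castSucc * (s' (ext (n+1) π) * rho (n+2) (n+1)) =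
        incl (n+1) t * s' (ext (n+1) π) *
          (L' (Fin.last (n+1)) (Fin.last n).castSucc * rho (n+2) (n+1)) := by
      calc incl (n+1) t * L' (Fin.last (n+1)) b.castSucc * (s' (ext (n+1) π) * rho (n+2) (n+1))
        = incl (n+1) t * (L' (Fin.last (n+1)) b.castSucc * s' (ext (n+1) π)) * rho (n+2) (n+1) := by
              group
        _ = _ := by rw [← p1]; group
    rw [e]; exact h
  · have h := Relation.EqvGen.rel _ _ (MarkovBase.stabPos (n+1) (t * s π))
    rw [map_mul, incl_s G G'] at h
    rw [map_mul, G'.sec_last]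
    generalize L' b.castSucc (Fin.last (n+1)) = X at *
    have p3 : X⁻¹ * s' (ext (n+1) π) =
        s' (ext (n+1) π) * (rho (n+2) (n+1) * (sigma (n+2) (n+1))⁻¹)⁻¹ := by
      rw [inv_mul_eq_iff_eq_mul, ← mul_assoc, ← p2]; group
    have e : incl (n+1) t * X⁻¹ * (s' (ext (n+1) π) * rho (n+2) (n+1)) =
        incl (n+1) t * s' (ext (n+1) π) * sigma (n+2) (n+1) := by
      calc incl (n+1) t * X⁻¹ * (s' (ext (n+1) π) * rho (n+2) (n+1))
        = incl (n+1) t * (X⁻¹ * s' (ext (n+1) π)) * rho (n+2) (n+1) := by group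
        _ = _ := by rw [p3]; group
    rw [e]; exact h

/-- Destabilization when the last strand carries no pure generator. -/
lemma destab {n : ℕ} {ι : UVB (n+1) →* Perm (Fin (n+1))} {s : Perm (Fin (n+1)) →* UVB (n+1)}
    {L : Fin (n+1) → Fin (n+1) → UVB (n+1)}
    {ι' : UVB (n+2) →* Perm (Fin (n+2))} {s' : Perm (Fin (n+2)) →* UVB (n+2)}
    {L' : Fin (n+2) → Fin (n+2) → UVB (n+2)}
    (G : Good (n+1) ι s L) (G' : Good (n+2) ι' s' L') {p : UVB (n+2)} {π : Perm (Fin (n+2))}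
    (hp : p ∈ P L' {e | Fin.last (n+1) ∉ e})
    (hπ : π (Fin.last n).castSucc = Fin.last (n+1)) :
    ∃ α : UVB (n+1), Markov ⟨n+2, p * s' π⟩ ⟨n+1, α⟩ ∧ numOrbits (ι α) = numOrbits π := by
  obtain ⟨t, ht, rfl⟩ := lift_P G G' hp
  obtain ⟨π₀, h0⟩ := exists_ext (π * swap (Fin.last n).castSucc (Fin.last (n+1)))
    (by rw [Perm.mul_apply, swap_apply_right, hπ])
  have h1 : π = ext (n+1) π₀ * swap (Fin.last n).castSucc (Fin.last (n+1)) := by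
    rw [← h0, mul_assoc, swap_mul_self, mul_one]
  refine ⟨t * s π₀, ?_, ?_⟩
  · rw [h1]; exact (stab_virt G G' t π₀).symm'
  · rw [map_mul, G.iota_P ht, one_mul, G.ret, h1, numOrbits_stab]

/-- Killing one self-generator on a 2-cycle formed by the last two strands. -/
lemma kill {ι : ∀ n, UVB n →* Perm (Fin n)} {s : ∀ n, Perm (Fin n) →* UVB n}
    {L : ∀ n, Fin n → Fin n → UVB n} (G : ∀ n, Good n (ι n) (s n) (L n))
    {t : UVB (m+2)} {π : Perm (Fin (m+2))}
    (h1 : π (Fin.last m).castSucc = Fin.last (m+1)) (h2 : π (Fin.last (m+1)) = (Fin.last m).castSucc)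
    {i j : Fin (m+2)}
    (hij : (i = (Fin.last m).castSucc ∧ j = Fin.last (m+1)) ∨
      (i = Fin.last (m+1) ∧ j = (Fin.last m).castSucc)) {z : ℤ} (hz : z = 1 ∨ z = -1)
    (ht : t ∈ P (L (m+2)) Set.univ) :
    Markov ⟨m+2, t * (L (m+2) i j) ^ z * s (m+2) π⟩ ⟨m+2, t * s (m+2) π⟩ := by
  obtain ⟨b, hb⟩ : ∃ b : Fin (m+2), b = (Fin.last m).castSucc := ⟨_, rfl⟩
  rw [← hb] at h1 h2 hij
  have hba : b ≠ Fin.last (m+1) := by rw [hb]; exact (Fin.castSucc_lt_last _).ne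
  have hijne : i ≠ j := by
    rcases hij with ⟨rfl, rfl⟩ | ⟨rfl, rfl⟩
    · exact hba
    · exact hba.symm
  -- first stabilization
  obtain ⟨π', hπ'⟩ : ∃ π', π' = ext (m+2) π * swap (Fin.last (m+1)).castSucc (Fin.last (m+2)) :=
    ⟨_, rfl⟩
  obtain ⟨a', ha'⟩ : ∃ a', a' = (Fin.last (m+1)).castSucc := ⟨_, rfl⟩
  obtain ⟨b', hb'⟩ : ∃ b', b' = b.castSucc := ⟨_, rfl⟩
  obtain ⟨c', hc'⟩ : ∃ c', c' = Fin.last (m+2) := ⟨_, rfl⟩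
  have nab : a' ≠ b' := by rw [ha', hb']; simpa using hba.symm
  have nac : a' ≠ c' := by rw [ha', hc']; exact (Fin.castSucc_lt_last _).ne
  have nbc : b' ≠ c' := by rw [hb', hc']; exact (Fin.castSucc_lt_last _).ne
  have f1 : π' b' = a' := by
    rw [hπ', Perm.mul_apply, ← ha', ← hc', swap_apply_of_ne_of_ne nab.symm nbc, hb',
      ext_castSucc, h1, ha']
  have f2 : π' a' = c' := by
    rw [hπ', Perm.mul_apply, ← ha', swap_apply_left, ext_last, hc']
  have f3 : π' c' = b' := by
    rw [hπ', Perm.mul_apply, ← ha', ← hc', swap_apply_right, ha', ext_castSucc, h2, hb']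
  obtain ⟨t', ht'⟩ : ∃ t', t' = incl (m+2) t := ⟨_, rfl⟩
  have ht'P : t' ∈ P (L (m+3)) {e | c' ∉ e} := by
    rw [ht']
    refine incl_P (G _) (G _) ?_ ht
    intro i j _ _
    rw [hc', Set.mem_ofPred_eq, Sym2.mem_iff, not_or]
    exact ⟨(Fin.castSucc_lt_last _).ne', (Fin.castSucc_lt_last _).ne'⟩
  have m1 := stab_virt (G (m+2)) (G (m+3)) (t * (L (m+2) i j) ^ z) π
  rw [map_mul, map_zpow, incl_L (G (m+2)) (G (m+3)) hijne, ← ht', ← hπ'] at m1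
  obtain ⟨k1, k2⟩ := stab_class (G (m+2)) (G (m+3)) t π h2
  rw [← ht', ← hπ', ← hc', ← hb'] at k1 k2
  -- both orientations agree after a second stabilization
  have flip : ∀ z : ℤ, Markov ⟨m+3, t' * (L (m+3) b' c') ^ z * s (m+3) π'⟩
      ⟨m+3, t' * (L (m+3) c' b') ^ z * s (m+3) π'⟩ := by
    intro z
    obtain ⟨π'', hπ''⟩ : ∃ π'', π'' = ext (m+3) π' *
      swap (Fin.last (m+2)).castSucc (Fin.last (m+3)) := ⟨_, rfl⟩
    have s1 := stab_virt (G (m+3)) (G (m+4)) (t' * (L (m+3) b' c') ^ z) π'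
    have s2 := stab_virt (G (m+3)) (G (m+4)) (t' * (L (m+3) c' b') ^ z) π'
    rw [map_mul, map_zpow, incl_L (G (m+3)) (G (m+4)) nbc, ← hπ''] at s1
    rw [map_mul, map_zpow, incl_L (G (m+3)) (G (m+4)) nbc.symm, ← hπ''] at s2
    have hle : ∀ x : Fin (m+3), x.castSucc ≠ Fin.last (m+3) := fun x => (Fin.castSucc_lt_last x).ne
    have nac'' : a'.castSucc ≠ c'.castSucc := by simpa using nac
    have nbc'' : b'.castSucc ≠ c'.castSucc := by simpa using nbc
    rw [← hc'] at hπ''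
    have g1 : π'' b'.castSucc = a'.castSucc := by
      rw [hπ'', Perm.mul_apply, swap_apply_of_ne_of_ne nbc'' (hle _), ext_castSucc, f1]
    have g2 : π'' a'.castSucc = c'.castSucc := by
      rw [hπ'', Perm.mul_apply, swap_apply_of_ne_of_ne nac'' (hle _), ext_castSucc, f2]
    have g3 : π'' c'.castSucc = Fin.last (m+3) := by
      rw [hπ'', Perm.mul_apply, swap_apply_left, ext_last]
    have g4 : π'' (Fin.last (m+3)) = b'.castSucc := by
      rw [hπ'', Perm.mul_apply, swap_apply_right, ext_castSucc, f3]
    have htP : incl (m+3) t' ∈ P (L (m+4)) {e | c'.castSucc ∉ e ∧ Fin.last (m+3) ∉ e} := by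
      refine incl_P (G _) (G _) ?_ ht'P
      intro i j _ hm
      rw [Set.mem_ofPred_eq, Sym2.mem_iff, not_or] at hm
      rw [Set.mem_ofPred_eq, Sym2.mem_iff, Sym2.mem_iff, not_or, not_or]
      exact ⟨⟨by simpa using hm.1, by simpa using hm.2⟩, (hle _).symm, (hle _).symm⟩
    have c1 := (G (m+4)).comm_P_L htP (hle a').symm (by simp)
    have c2 := (G (m+4)).comm_P_L htP nbc''.symm (by simp)
    have q1 := (G (m+4)).shift_L π'' (hle a').symm g4 g2 z c1
    have q2 := (G (m+4)).shift_L π'' nbc''.symm g3 g1 z c2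
    exact ((s1.trans' q1).trans' q2).trans' s2.symm'
  have cb := (G (m+3)).comm_P_L ht'P nbc (by simp)
  have cc := (G (m+3)).comm_P_L ht'P nbc.symm (by simp)
  rcases hij with ⟨rfl, rfl⟩ | ⟨rfl, rfl⟩
  · -- L b a shifts to L c b
    rw [← ha', ← hb'] at m1
    have q := (G (m+3)).shift_L π' nbc.symm f3 f1 z cc
    rcases hz with rfl | rfl
    · refine (m1.trans' q).trans' ?_
      rw [zpow_one]
      exact k1.symm'
    · refine ((m1.trans' q).trans' (flip (-1)).symm').trans' ?_
      rw [zpow_neg_one]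
      exact k2.symm'
  · rw [← ha', ← hb'] at m1
    have q := (G (m+3)).shift_L π' nbc f1 f3 z cb
    rcases hz with rfl | rfl
    · refine ((m1.trans' q).trans' (flip 1)).trans' ?_
      rw [zpow_one]
      exact k1.symm'
    · refine (m1.trans' q).trans' ?_
      rw [zpow_neg_one]
      exact k2.symm'

/-- Killing all self-generators on a 2-cycle formed by the last two strands. -/
lemma kill_all {ι : ∀ n, UVB n →* Perm (Fin n)} {s : ∀ n, Perm (Fin n) →* UVB n}
    {L : ∀ n, Fin n → Fin n → UVB n} (G : ∀ n, Good n (ι n) (s n) (L n))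
    {p w : UVB (m+2)} {π : Perm (Fin (m+2))}
    (h1 : π (Fin.last m).castSucc = Fin.last (m+1)) (h2 : π (Fin.last (m+1)) = (Fin.last m).castSucc)
    (hp : p ∈ P (L (m+2)) Set.univ)
    (hw : w ∈ P (L (m+2)) {s((Fin.last m).castSucc, Fin.last (m+1))}) :
    Markov ⟨m+2, p * w * s (m+2) π⟩ ⟨m+2, p * s (m+2) π⟩ := by
  have hsub : ∀ x, x ∈ P (L (m+2)) {s((Fin.last m).castSucc, Fin.last (m+1))} →
      x ∈ P (L (m+2)) Set.univ := fun x hx => P_mono (Set.subset_univ _) hx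
  induction hw using Subgroup.closure_induction_right with
  | one => rw [mul_one]; exact Markov.refl' _
  | mul_right x hx y hy ih =>
    obtain ⟨i, j, hij, hA, rfl⟩ := hy
    rw [Set.mem_singleton_iff, Sym2.eq_iff] at hA
    have := kill G h1 h2 hA (z := 1) (Or.inl rfl) (mul_mem hp (hsub x hx))
    rw [zpow_one, mul_assoc p] at this
    exact this.trans' ih
  | mul_inv_cancel x hx y hy ih =>
    obtain ⟨i, j, hij, hA, rfl⟩ := hy
    rw [Set.mem_singleton_iff, Sym2.eq_iff] at hA
    have := kill G h1 h2 hA (z := -1) (Or.inr rfl) (mul_mem hp (hsub x hx))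
    rw [zpow_neg_one, mul_assoc p] at this
    exact this.trans' ih

/-- One strand can be removed when the permutation is nontrivial. -/
lemma reduce {ι : ∀ n, UVB n →* Perm (Fin n)} {s : ∀ n, Perm (Fin n) →* UVB n}
    {L : ∀ n, Fin n → Fin n → UVB n} (G : ∀ n, Good n (ι n) (s n) (L n))
    (α : UVB (m+2)) (hα : ι (m+2) α ≠ 1) :
    ∃ α' : UVB (m+1), Markov ⟨m+2, α⟩ ⟨m+1, α'⟩ ∧
      numOrbits (ι (m+1) α') = numOrbits (ι (m+2) α) := by
  obtain ⟨y, hy⟩ : ∃ y, ι (m+2) α y ≠ y := by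
    by_contra! h
    exact hα (Equiv.ext h)
  obtain ⟨b, hb⟩ : ∃ b : Fin (m+2), b = (Fin.last m).castSucc := ⟨_, rfl⟩
  obtain ⟨a, ha⟩ : ∃ a : Fin (m+2), a = Fin.last (m+1) := ⟨_, rfl⟩
  have hba : b ≠ a := by rw [hb, ha]; exact (Fin.castSucc_lt_last _).ne
  obtain ⟨τ, hτ1, hτ2⟩ := exists_perm2 hy.symm hba
  -- conjugate so that the second to last strand goes to the last one
  have hconj : Markov ⟨m+2, α⟩ ⟨m+2, s (m+2) τ * α * (s (m+2) τ)⁻¹⟩ :=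
    Relation.EqvGen.rel _ _ (MarkovBase.conj (m+2) α (s (m+2) τ))
  obtain ⟨p, hp, π, hdec⟩ := (G (m+2)).decomp (s (m+2) τ * α * (s (m+2) τ)⁻¹)
  have hπ : π = τ * ι (m+2) α * τ⁻¹ := by
    have := congrArg (ι (m+2)) hdec
    rw [map_mul, map_mul, map_mul, map_inv, (G (m+2)).iota_P hp, (G (m+2)).ret, (G (m+2)).ret,
      one_mul] at this
    exact this.symm
  have hπb : π b = a := by
    rw [hπ, ← hτ1, ← hτ2]; simp
  have hnum : numOrbits π = numOrbits (ι (m+2) α) := by rw [hπ, numOrbits_conj]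
  rw [hdec] at hconj
  rw [← hnum]
  suffices h : ∃ r ∈ P (L (m+2)) {e | a ∉ e}, Markov ⟨m+2, p * s (m+2) π⟩ ⟨m+2, r * s (m+2) π⟩ by
    obtain ⟨r, hr, hM⟩ := h
    obtain ⟨α', h1, h2⟩ := destab (G (m+1)) (G (m+2)) (p := r) (π := π) (by rw [← ha]; exact hr)
      (by rw [← ha, ← hb]; exact hπb)
    exact ⟨α', (hconj.trans' hM).trans' h1, h2⟩
  -- first shift: all generators touching `a`
  obtain ⟨p1, hp1, q1, hq1, rfl⟩ := (G (m+2)).split_P (A := {e | a ∉ e}) (B := {e | a ∈ e}) hp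
    (by simp) (by intro e _; exact (Classical.em (a ∈ e)).symm)
  obtain ⟨r1, hr1, M1⟩ := (G (m+2)).shift_P (B' := {e | b ∈ e}) π (by
    intro i j _ h
    simp only [Set.mem_ofPred_eq, Sym2.mem_iff] at h ⊢
    rcases h with h | h
    · exact Or.inl (π.injective (hπb.trans h))
    · exact Or.inr (π.injective (hπb.trans h))) hp1 hq1
  obtain ⟨p2, hp2, q2, hq2, rfl⟩ := (G (m+2)).split_P (A := {e | a ∉ e}) (B := {s(b, a)}) hr1
    (by simp) (by
      rintro e (h | h)
      · exact Or.inl h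
      · by_cases h' : a ∈ e
        · exact Or.inr ((Sym2.mem_and_mem_iff hba).mp ⟨h, h'⟩)
        · exact Or.inl h')
  by_cases hπa : π a = b
  · refine ⟨p2, hp2, M1.trans' ?_⟩
    apply kill_all G
    · rw [← hb, ← ha]; exact hπb
    · rw [← hb, ← ha]; exact hπa
    · exact P_mono (Set.subset_univ _) hp2
    · rw [← hb, ← ha]; exact hq2
  · obtain ⟨r2, hr2, M2⟩ := (G (m+2)).shift_P (B' := {e | a ∉ e}) π (by
      intro i j _ h
      rw [Set.mem_singleton_iff, Sym2.eq_iff] at h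
      rw [Set.mem_ofPred_eq, Sym2.mem_iff, not_or]
      have key : ∀ x, (π x = a ∨ π x = b) → a ≠ x := by
        rintro x (h | h) rfl
        · exact hba (π.injective (hπb.trans h.symm))
        · exact hπa h
      constructor
      · apply key; tauto
      · apply key; tauto) hp2 hq2
    rw [Set.union_self] at hr2
    exact ⟨r2, hr2, M1.trans' M2⟩

lemma main_aux {ι : ∀ n, UVB n →* Perm (Fin n)} {s : ∀ n, Perm (Fin n) →* UVB n}
    {L : ∀ n, Fin n → Fin n → UVB n} (G : ∀ n, Good n (ι n) (s n) (L n)) (n : ℕ) (α : UVB n) :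
    ∃ k, k = numOrbits (ι n α) ∧ ∃ β : UVB k, β ∈ (ι k).ker ∧ Markov ⟨n, α⟩ ⟨k, β⟩ := by
  induction n with
  | zero =>
    have h : ι 0 α = 1 := Subsingleton.elim _ _
    exact ⟨0, by rw [h, numOrbits_one], α, h, Markov.refl' _⟩
  | succ n ih =>
    by_cases h : ι (n+1) α = 1
    · exact ⟨n+1, by rw [h, numOrbits_one], α, h, Markov.refl' _⟩
    · rcases n with _ | n
      · exact absurd (Equiv.ext fun x => Subsingleton.elim (α := Fin 1) _ _) h
      · obtain ⟨α', h1, h2⟩ := reduce G α h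
        obtain ⟨k, hk, β, hβ, hM⟩ := ih α'
        exact ⟨k, hk.trans h2, β, hβ, h1.trans' hM⟩

end main

end UVBProof


/-! ## Statement 7 -/

/-- Every braid `α ∈ UVB n` (n ≥ 2) is fused Markov equivalent to a
pure braid `β ∈ UVP m`, where `m` is the number of orbits of ι(α) on {1,…,n}
(= the number of components of the closure of α). -/
theorem statement7 (ι : ∀ n, UVB n →* Equiv.Perm (Fin n)) (hι : ∀ n, IsIota n (ι n))
    (n : ℕ) (hn : 2 ≤ n) (α : UVB n) :
    ∃ β : UVB (numOrbits (ι n α)),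
      β ∈ (ι (numOrbits (ι n α))).ker ∧ Markov ⟨n, α⟩ ⟨numOrbits (ι n α), β⟩ := by

  have h : ∀ n, ∃ s L, UVBProof.Good n (ι n) s L := fun n => UVBProof.exists_good (hι n)
  choose s L G using h
  obtain ⟨k, rfl, β, hβ, hM⟩ := UVBProof.main_aux G n α
  exact ⟨β, hβ, hM⟩
end

section
/- Let n ≥ 2 and let α, β ∈ UVP_n. If there exists a permutation π ∈ S_n such that s(π) α s(π)^{−1} and β lie in the same coset of the commutator subgroup [UVP_n, UVP_n] of UVP_n (i.e., s(π) α s(π)^{−1} β^{−1} ∈ [UVP_n, UVP_n]), then α and β are fused Markov equivalent. -/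
section Words
variable {G : Type*} [Group G]

theorem uvb_conj_comm {p q : G} (g h : G) (hgh : h * g = 1) (hpq : Commute p q) :
    Commute (g * p * h) (g * q * h) := by
  have : h = g⁻¹ := eq_inv_of_mul_eq_one_left hgh
  subst this
  exact (hpq.map (MulAut.conj g))

theorem uvb_three_aux (a b u : G) (ha : a * a = 1) (hb : b * b = 1)
    (hab : b * a * b = a * b * a)
    (h1 : (u⁻¹ * a) * (a * b * (u⁻¹ * a) * b * a) * (u⁻¹ * a) =
      (a * b * (u⁻¹ * a) * b * a) * (u⁻¹ * a) * (a * b * (u⁻¹ * a) * b * a))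
    (h3 : a * (a * b * (u⁻¹ * a) * b * a) * (u⁻¹ * a) =
      (a * b * (u⁻¹ * a) * b * a) * (u⁻¹ * a) * b)
    (h4 : b * (u⁻¹ * a) * (a * b * (u⁻¹ * a) * b * a) =
      (u⁻¹ * a) * (a * b * (u⁻¹ * a) * b * a) * a) :
    Commute u (b * u * b) ∧ Commute u (b * a * u * a * b) ∧
    Commute u (a * b * u * b * a) ∧ Commute u (b * a * b * u * b * a * b) := by
  have ha' : ∀ x, a * (a * x) = x := fun x => by rw [← mul_assoc, ha, one_mul]
  have hb' : ∀ x, b * (b * x) = x := fun x => by rw [← mul_assoc, hb, one_mul]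
  have hab0 : b * (a * b) = a * (b * a) := by simpa [mul_assoc] using hab
  have hab' : ∀ x, b * (a * (b * x)) = a * (b * (a * x)) := fun x => by
    simpa [mul_assoc] using congrArg (· * x) hab
  have hai : a⁻¹ = a := inv_eq_of_mul_eq_one_left ha
  have hbi : b⁻¹ = b := inv_eq_of_mul_eq_one_left hb
  have c4 : Commute u⁻¹ (b * u⁻¹ * b) := by
    unfold Commute SemiconjBy
    have := congrArg (· * (b * a * b)) h4
    simp only [mul_assoc, ha, ha', hb, hb', hab0, hab', mul_one] at this ⊢
    exact this.symm
  have c3 : Commute (b * u⁻¹ * b) (a * b * u⁻¹ * b * a) := by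
    unfold Commute SemiconjBy
    have := congrArg (· * (b * a * b)) h3
    simp only [mul_assoc, ha, ha', hb, hb', hab0, hab', mul_one] at this ⊢
    exact this
  have c1 : Commute u⁻¹ (a * b * u⁻¹ * b * a) := by
    have key : u⁻¹ * (b * u⁻¹ * b) * (a * b * u⁻¹ * b * a) =
        (a * b * u⁻¹ * b * a) * (b * u⁻¹ * b) * u⁻¹ := by
      have := congrArg (· * (b * a * b)) h1
      simp only [mul_assoc, ha, ha', hb, hb', hab0, hab', mul_one] at this ⊢
      exact this
    rw [c4.eq, ← c3.eq, mul_assoc (b * u⁻¹ * b), mul_assoc (b * u⁻¹ * b)] at key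
    exact mul_left_cancel key
  have k4 : Commute u (b * u * b) := by
    have := c4.inv_inv
    simpa [hbi, mul_assoc] using this
  have k3 : Commute (b * u * b) (a * b * u * b * a) := by
    have := c3.inv_inv
    simpa [hbi, hai, mul_assoc] using this
  have k1 : Commute u (a * b * u * b * a) := by
    have := c1.inv_inv
    simpa [hbi, hai, mul_assoc] using this
  refine ⟨k4, ?_, k1, ?_⟩
  · have := (uvb_conj_comm (b * a) (a * b) (by simp [mul_assoc, ha, hb']) k1).symm
    simpa only [mul_assoc, ha, ha', hb, hb', mul_one] using this
  · have := uvb_conj_comm b b hb k3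
    simpa only [mul_assoc, ha, ha', hb, hb', mul_one] using this

/-- The relations on three consecutive strands. -/
structure UvbThree (a b s t : G) : Prop where
  ha : a * a = 1
  hb : b * b = 1
  hab : a * b * a = b * a * b
  h1 : s * t * s = t * s * t
  h2 : a * b * s = t * a * b
  h3 : a * t * s = t * s * b
  h4 : b * s * t = s * t * a

theorem UvbThree.t_eq {a b s t : G} (H : UvbThree a b s t) : t = a * b * s * b * a := by
  have := H.h2
  have ha' : ∀ x, a * (a * x) = x := fun x => by rw [← mul_assoc, H.ha, one_mul]
  have hb' : ∀ x, b * (b * x) = x := fun x => by rw [← mul_assoc, H.hb, one_mul]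
  rw [this]
  simp [mul_assoc, hb', H.ha]

theorem UvbThree.left {a b s t : G} (H : UvbThree a b s t) :
    Commute (a * s⁻¹) (b * (a * s⁻¹) * b) ∧ Commute (a * s⁻¹) (b * a * (a * s⁻¹) * a * b) ∧
    Commute (a * s⁻¹) (a * b * (a * s⁻¹) * b * a) ∧
    Commute (a * s⁻¹) (b * a * b * (a * s⁻¹) * b * a * b) := by
  have hs : ((a * s⁻¹)⁻¹ * a) = s := by simp
  refine uvb_three_aux a b (a * s⁻¹) H.ha H.hb H.hab.symm ?_ ?_ ?_ <;> rw [hs, ← H.t_eq]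
  · exact H.h1
  · exact H.h3
  · exact H.h4

theorem UvbThree.x_eq {a b s t : G} (H : UvbThree a b s t) :
    b * t⁻¹ = a * b * (a * s⁻¹) * b * a := by
  have ha' : ∀ x, a * (a * x) = x := fun x => by rw [← mul_assoc, H.ha, one_mul]
  have hai : a⁻¹ = a := inv_eq_of_mul_eq_one_left H.ha
  have hbi : b⁻¹ = b := inv_eq_of_mul_eq_one_left H.hb
  have hab' : ∀ x, b * (a * (b * x)) = a * (b * (a * x)) := fun x => by
    simpa [mul_assoc] using congrArg (· * x) H.hab.symm
  rw [H.t_eq]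
  simp [mul_assoc, hai, hbi, hab']

theorem UvbThree.right {a b s t : G} (H : UvbThree a b s t) :
    Commute (b * t⁻¹) (b * a * b * (b * t⁻¹) * (b * a * b)⁻¹) ∧
    Commute (b * t⁻¹) (b * a * (b * t⁻¹) * (b * a)⁻¹) ∧
    Commute (b * t⁻¹) (a * (b * t⁻¹) * a⁻¹) ∧
    Commute (b * t⁻¹) (a * b * (b * t⁻¹) * (a * b)⁻¹) := by
  have ha := H.ha
  have hb := H.hb
  have ha' : ∀ x, a * (a * x) = x := fun x => by rw [← mul_assoc, H.ha, one_mul]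
  have hb' : ∀ x, b * (b * x) = x := fun x => by rw [← mul_assoc, H.hb, one_mul]
  have hai : a⁻¹ = a := inv_eq_of_mul_eq_one_left H.ha
  have hbi : b⁻¹ = b := inv_eq_of_mul_eq_one_left H.hb
  have hab0 : b * (a * b) = a * (b * a) := by simpa [mul_assoc] using H.hab.symm
  have hab' : ∀ x, b * (a * (b * x)) = a * (b * (a * x)) := fun x => by
    simpa [mul_assoc] using congrArg (· * x) H.hab.symm
  obtain ⟨k1, k2, k3, k4⟩ := H.left
  rw [H.x_eq]
  generalize a * s⁻¹ = u at *
  have hg : (b * a) * (a * b) = 1 := by simp [mul_assoc, ha', hb]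
  refine ⟨?_, ?_, ?_, ?_⟩
  · have := uvb_conj_comm (a * b) (b * a) hg k1
    simpa only [mul_assoc, mul_inv_rev, hai, hbi, ha, ha', hb, hb', hab0, hab', mul_one] using this
  · have := uvb_conj_comm (a * b) (b * a) hg k2
    simpa only [mul_assoc, mul_inv_rev, hai, hbi, ha, ha', hb, hb', hab0, hab', mul_one] using this
  · have := uvb_conj_comm (a * b) (b * a) hg k4
    simpa only [mul_assoc, mul_inv_rev, hai, hbi, ha, ha', hb, hb', hab0, hab', mul_one] using this
  · have := uvb_conj_comm (a * b) (b * a) hg k3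
    simpa only [mul_assoc, mul_inv_rev, hai, hbi, ha, ha', hb, hb', hab0, hab', mul_one] using this

/-- The relations on four consecutive strands. -/
structure UvbFour (a b c s t r : G) : Prop where
  L : UvbThree a b s t
  R : UvbThree b c t r
  hac : Commute a c
  hsc : Commute s c
  har : Commute a r
  hsr : Commute s r

theorem UvbFour.shift {a b c s t r : G} (H : UvbFour a b c s t r) :
    b * a * c * b * (c * r⁻¹) * (b * a * c * b)⁻¹ = a * s⁻¹ := by
  have ha := H.L.ha
  have hb := H.L.hb
  have hc := H.R.hb
  have ha' : ∀ x, a * (a * x) = x := fun x => by rw [← mul_assoc, ha, one_mul]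
  have hb' : ∀ x, b * (b * x) = x := fun x => by rw [← mul_assoc, hb, one_mul]
  have hc' : ∀ x, c * (c * x) = x := fun x => by rw [← mul_assoc, hc, one_mul]
  have hai : a⁻¹ = a := inv_eq_of_mul_eq_one_left ha
  have hbi : b⁻¹ = b := inv_eq_of_mul_eq_one_left hb
  have hci : c⁻¹ = c := inv_eq_of_mul_eq_one_left hc
  have hca' : ∀ x, c * (a * x) = a * (c * x) := fun x => by
    rw [← mul_assoc, ← H.hac.eq, mul_assoc]
  rw [H.R.x_eq, H.L.x_eq]
  simp only [mul_assoc, mul_inv_rev, hai, hbi, hci, ha', hb', hc', ha, hb, hc, hca', mul_one]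

theorem UvbFour.core {a b c s t r : G} (H : UvbFour a b c s t r) :
    (b * (a * b * c * b * a)) * (b * (a * b * c * b * a)) = 1 ∧
    (b * (a * b * c * b * a)) * (a * s⁻¹) * (b * (a * b * c * b * a)) = r⁻¹ * c ∧
    Commute (r⁻¹ * c) (b * (a * s⁻¹) * b) ∧ Commute (r⁻¹ * c) (b * (s⁻¹ * a) * b) := by
  have ha := H.L.ha
  have hb := H.L.hb
  have hc := H.R.hb
  have ha' : ∀ x, a * (a * x) = x := fun x => by rw [← mul_assoc, ha, one_mul]
  have hb' : ∀ x, b * (b * x) = x := fun x => by rw [← mul_assoc, hb, one_mul]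
  have hc' : ∀ x, c * (c * x) = x := fun x => by rw [← mul_assoc, hc, one_mul]
  have hai : a⁻¹ = a := inv_eq_of_mul_eq_one_left ha
  have hbi : b⁻¹ = b := inv_eq_of_mul_eq_one_left hb
  have hci : c⁻¹ = c := inv_eq_of_mul_eq_one_left hc
  have hca : c * a = a * c := H.hac.eq.symm
  have hca' : ∀ x, c * (a * x) = a * (c * x) := fun x => by
    rw [← mul_assoc, ← H.hac.eq, mul_assoc]
  have hab0 : b * (a * b) = a * (b * a) := by simpa [mul_assoc] using H.L.hab.symm
  have hab' : ∀ x, b * (a * (b * x)) = a * (b * (a * x)) := fun x => by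
    simpa [mul_assoc] using congrArg (· * x) H.L.hab.symm
  have hbc0 : c * (b * c) = b * (c * b) := by simpa [mul_assoc] using H.R.hab.symm
  have hbc' : ∀ x, c * (b * (c * x)) = b * (c * (b * x)) := fun x => by
    simpa [mul_assoc] using congrArg (· * x) H.R.hab.symm
  have hcba0 : c * (b * (a * c)) = b * (c * (b * a)) := by
    rw [← hca, hbc']
  have hcba' : ∀ x, c * (b * (a * (c * x))) = b * (c * (b * (a * x))) := fun x => by
    rw [← hca', hbc']
  have hcu : Commute c (a * s⁻¹) := H.hac.symm.mul_right H.hsc.symm.inv_right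
  obtain ⟨k1, k2, k3, k4⟩ := H.L.left
  have hr : r⁻¹ * c = c * (b * c * (a * b * (a * s⁻¹) * b * a) * c * b) * c := by
    rw [← H.L.x_eq, ← H.R.x_eq]
    simp [mul_assoc, hc']
  have hy : s⁻¹ * a = a * (a * s⁻¹) * a := by simp [mul_assoc, ha']
  have hA : a * (r⁻¹ * c) * a = r⁻¹ * c := by
    rw [(H.har.inv_right.mul_right H.hac).eq, mul_assoc, ha, mul_one]
  rw [hr] at hA
  rw [hr, hy]
  generalize a * s⁻¹ = u at *
  have hcu0 : c * u = u * c := hcu.eq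
  have hcu' : ∀ x, c * (u * x) = u * (c * x) := fun x => by
    rw [← mul_assoc, hcu.eq, mul_assoc]
  have hpi : (b * (a * b * c * b * a)) * (b * (a * b * c * b * a)) = 1 := by
    simp only [mul_assoc, ha', hb', hc', ha, hb, hc, hca', hab0, hab', hbc0, hbc', hcba0, hcba',
      hca, mul_one]
  have e : (b * (a * b * c * b * a)) * u * (b * (a * b * c * b * a)) =
      c * (b * c * (a * b * u * b * a) * c * b) * c := by
    rw [← hA]
    simp only [mul_assoc, ha', hb', hc', ha, hb, hc, hca', hab0, hab', hbc0, hbc', hcba0, hcba',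
      hca, hcu0, hcu', mul_one]
  refine ⟨hpi, e, ?_, ?_⟩
  · rw [← e]
    have := uvb_conj_comm _ _ hpi (uvb_conj_comm c c hc k4)
    simpa only [mul_assoc, ha', hb', hc', ha, hb, hc, hca', hab0, hab', hbc0, hbc', hcba0, hcba',
      hca, hcu0, hcu', mul_one] using this
  · rw [← e]
    have := uvb_conj_comm _ _ hpi (uvb_conj_comm c c hc k3)
    simpa only [mul_assoc, ha', hb', hc', ha, hb, hc, hca', hab0, hab', hbc0, hbc', hcba0, hcba',
      hca, hcu0, hcu', mul_one] using this

/-- The conjugation that swaps two letters. -/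
theorem uvb_swap_conj (x x' y z w p : G) (hp : p * p = 1) (hx' : p * x * p = x')
    (hxz : Commute x z) (hxz' : Commute x' z) (hxw : Commute x w) (hxw' : Commute x' w)
    (hxx : Commute x' x) (hxy : Commute x' y) :
    (x' * x)⁻¹ * (z * (x * y * w) * p) * ((x' * x)⁻¹)⁻¹ = z * (y * x * w) * p := by
  have hX : p * (x' * x) = (x' * x) * p := by
    have h1 : p * x' = x * p := by
      rw [← hx', ← mul_assoc, ← mul_assoc, hp, one_mul]
    have h2 : p * x = x' * p := by
      rw [← hx', mul_assoc, hp, mul_one]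
    rw [← mul_assoc, h1, mul_assoc, h2, ← mul_assoc, hxx.eq]
  have hz : Commute (x' * x) z := hxz'.mul_left hxz
  have hw : Commute (x' * x) w := hxw'.mul_left hxw
  rw [inv_inv, mul_assoc, mul_assoc _ p, hX, inv_mul_eq_iff_eq_mul]
  calc z * (x * y * w) * (x' * x * p) = z * (x * y * (w * (x' * x))) * p := by group
    _ = z * (x * y * ((x' * x) * w)) * p := by rw [hw.eq]
    _ = z * (x * (y * x') * x * w) * p := by group
    _ = z * (x * (x' * y) * x * w) * p := by rw [hxy.eq]
    _ = z * ((x * x') * (y * x * w)) * p := by group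
    _ = z * ((x' * x) * (y * x * w)) * p := by rw [hxx.eq]
    _ = (z * (x' * x)) * (y * x * w) * p := by group
    _ = ((x' * x) * z) * (y * x * w) * p := by rw [hz.eq]
    _ = _ := by group

end Words
section Rels
open UVBGen

theorem uvb_rho_sq (n k : ℕ) : UVB.rho n k * UVB.rho n k = 1 := by
  unfold UVB.rho
  split_ifs with h
  · exact PresentedGroup.one_of_mem (rels := uvbRels n)
      (Or.inr (Or.inr ⟨⟨k - 1, by omega⟩, rfl⟩))
  · simp

theorem uvb_rho_inv (n k : ℕ) : (UVB.rho n k)⁻¹ = UVB.rho n k :=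
  inv_eq_of_mul_eq_one_left (uvb_rho_sq n k)

theorem uvb_far (n k l : ℕ) (h : k + 2 ≤ l ∨ l + 2 ≤ k) :
    Commute (UVB.sigma n k) (UVB.sigma n l) ∧ Commute (UVB.rho n k) (UVB.rho n l) ∧
    Commute (UVB.sigma n k) (UVB.rho n l) := by
  unfold UVB.sigma UVB.rho
  by_cases hk : 1 ≤ k ∧ k ≤ n - 1
  · by_cases hl : 1 ≤ l ∧ l ≤ n - 1
    · rw [dif_pos hk, dif_pos hk, dif_pos hl, dif_pos hl]
      have hkl : (((⟨k - 1, by omega⟩ : Fin (n - 1)) : ℕ) + 2 ≤ ((⟨l - 1, by omega⟩ : Fin (n - 1)) : ℕ)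
        ∨ ((⟨l - 1, by omega⟩ : Fin (n - 1)) : ℕ) + 2 ≤ ((⟨k - 1, by omega⟩ : Fin (n - 1)) : ℕ)) := by
        simp only
        omega
      refine ⟨?_, ?_, ?_⟩
      · exact PresentedGroup.mk_eq_mk_of_mul_inv_mem (rels := uvbRels n)
          (Or.inr (Or.inl ⟨_, _, hkl, Or.inl rfl⟩))
      · exact PresentedGroup.mk_eq_mk_of_mul_inv_mem (rels := uvbRels n)
          (Or.inr (Or.inl ⟨_, _, hkl, Or.inr (Or.inl rfl)⟩))
      · exact PresentedGroup.mk_eq_mk_of_mul_inv_mem (rels := uvbRels n)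
          (Or.inr (Or.inl ⟨_, _, hkl, Or.inr (Or.inr rfl)⟩))
    · simp [dif_neg hl]
  · simp [dif_neg hk]

theorem uvb_three (n k : ℕ) (h1 : 1 ≤ k) (h2 : k + 1 ≤ n - 1) :
    UvbThree (UVB.rho n k) (UVB.rho n (k + 1)) (UVB.sigma n k) (UVB.sigma n (k + 1)) := by
  have hk : 1 ≤ k ∧ k ≤ n - 1 := by omega
  have hl : 1 ≤ k + 1 ∧ k + 1 ≤ n - 1 := by omega
  have hkl : ((⟨k + 1 - 1, by omega⟩ : Fin (n - 1)) : ℕ) = ((⟨k - 1, by omega⟩ : Fin (n - 1)) : ℕ) + 1 := by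
    simp only
    omega
  refine ⟨uvb_rho_sq _ _, uvb_rho_sq _ _, ?_, ?_, ?_, ?_, ?_⟩
  all_goals simp only [UVB.rho, UVB.sigma, dif_pos hk, dif_pos hl]
  · exact PresentedGroup.mk_eq_mk_of_mul_inv_mem (rels := uvbRels n)
          (Or.inl ⟨_, _, hkl, Or.inr (Or.inl rfl)⟩)
  · exact PresentedGroup.mk_eq_mk_of_mul_inv_mem (rels := uvbRels n)
          (Or.inl ⟨_, _, hkl, Or.inl rfl⟩)
  · exact PresentedGroup.mk_eq_mk_of_mul_inv_mem (rels := uvbRels n)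
          (Or.inl ⟨_, _, hkl, Or.inr (Or.inr (Or.inl rfl))⟩)
  · exact PresentedGroup.mk_eq_mk_of_mul_inv_mem (rels := uvbRels n)
          (Or.inl ⟨_, _, hkl, Or.inr (Or.inr (Or.inr (Or.inl rfl)))⟩)
  · exact PresentedGroup.mk_eq_mk_of_mul_inv_mem (rels := uvbRels n)
          (Or.inl ⟨_, _, hkl, Or.inr (Or.inr (Or.inr (Or.inr rfl)))⟩)

theorem uvb_four (n k : ℕ) (h1 : 1 ≤ k) (h2 : k + 2 ≤ n - 1) :
    UvbFour (UVB.rho n k) (UVB.rho n (k + 1)) (UVB.rho n (k + 2))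
      (UVB.sigma n k) (UVB.sigma n (k + 1)) (UVB.sigma n (k + 2)) where
  L := uvb_three n k h1 (by omega)
  R := uvb_three n (k + 1) (by omega) h2
  hac := (uvb_far n k (k + 2) (by omega)).2.1
  hsc := (uvb_far n k (k + 2) (by omega)).2.2
  har := (uvb_far n (k + 2) k (by omega)).2.2.symm
  hsr := (uvb_far n k (k + 2) (by omega)).1

/-- Induction over the generators. -/
theorem uvb_gen (n : ℕ) (H : Subgroup (UVB n))
    (hσ : ∀ k, 1 ≤ k → k ≤ n - 1 → UVB.sigma n k ∈ H)
    (hρ : ∀ k, 1 ≤ k → k ≤ n - 1 → UVB.rho n k ∈ H) (g : UVB n) : g ∈ H := by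
  refine PresentedGroup.generated_by _ H ?_ g
  rintro (i | i)
  · have := hσ (i.val + 1) (by omega) (by have := i.isLt; omega)
    unfold UVB.sigma at this
    rw [dif_pos ⟨by omega, by have := i.isLt; omega⟩] at this
    exact this
  · have := hρ (i.val + 1) (by omega) (by have := i.isLt; omega)
    unfold UVB.rho at this
    rw [dif_pos ⟨by omega, by have := i.isLt; omega⟩] at this
    exact this

theorem uvb_incl_sigma (n k : ℕ) (h : k ≤ n - 1) :
    UVB.incl n (UVB.sigma n k) = UVB.sigma (n + 1) k := by
  unfold UVB.sigma
  by_cases hk : 1 ≤ k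
  · rw [dif_pos ⟨hk, h⟩, dif_pos ⟨hk, by omega⟩]
    unfold UVB.incl
    rw [PresentedGroup.toGroup.of]
    rfl
  · rw [dif_neg (by omega), dif_neg (by omega), map_one]

theorem uvb_incl_rho (n k : ℕ) (h : k ≤ n - 1) :
    UVB.incl n (UVB.rho n k) = UVB.rho (n + 1) k := by
  unfold UVB.rho
  by_cases hk : 1 ≤ k
  · rw [dif_pos ⟨hk, h⟩, dif_pos ⟨hk, by omega⟩]
    unfold UVB.incl
    rw [PresentedGroup.toGroup.of]
    rfl
  · rw [dif_neg (by omega), dif_neg (by omega), map_one]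

end Rels

section MarkovMoves

theorem markov_refl (a : Σ n, UVB n) : Markov a a := Relation.EqvGen.refl _
theorem markov_symm {a b : Σ n, UVB n} (h : Markov a b) : Markov b a := Relation.EqvGen.symm _ _ h
theorem markov_trans {a b c : Σ n, UVB n} (h : Markov a b) (h' : Markov b c) : Markov a c :=
  Relation.EqvGen.trans _ _ _ h h'

theorem markov_conj {n : ℕ} (α γ : UVB n) : Markov ⟨n, α⟩ ⟨n, γ * α * γ⁻¹⟩ :=
  Relation.EqvGen.rel _ _ (MarkovBase.conj n α γ)

theorem markov_conj' {n : ℕ} {α β : UVB n} (γ : UVB n) (h : γ * α * γ⁻¹ = β) :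
    Markov ⟨n, α⟩ ⟨n, β⟩ := h ▸ markov_conj α γ

theorem markov_virt {n : ℕ} (α : UVB n) :
    Markov ⟨n, α⟩ ⟨n + 1, UVB.incl n α * UVB.rho (n + 1) n⟩ :=
  Relation.EqvGen.rel _ _ (MarkovBase.stabVirt n α)

/-- The double inclusion. -/
def uvbIncl2 (n : ℕ) : UVB n →* UVB (n + 2) := (UVB.incl (n + 1)).comp (UVB.incl n)

/-- The double stabilization on the last two strands. -/
theorem markov_double (n : ℕ) (w z β : UVB n) (hz : Commute z β) :
    Markov ⟨n, w * z * β⟩ ⟨n + 2,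
      (UVB.rho (n + 2) n * uvbIncl2 n z * UVB.rho (n + 2) n) * uvbIncl2 n (w * β) *
        (UVB.rho (n + 2) n * (UVB.rho (n + 2) (n - 1) * UVB.rho (n + 2) n * UVB.rho (n + 2) (n + 1) *
          UVB.rho (n + 2) n * UVB.rho (n + 2) (n - 1)))⟩ := by
  refine markov_trans (markov_virt _) ?_
  refine markov_trans (markov_conj' (UVB.rho (n + 1) n * UVB.incl n z * UVB.rho (n + 1) n)
    (β := UVB.rho (n + 1) n * UVB.incl n z * UVB.rho (n + 1) n * UVB.incl n (w * β) *
      UVB.rho (n + 1) n) ?_) ?_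
  · have hb' : ∀ x, UVB.rho (n + 1) n * (UVB.rho (n + 1) n * x) = x := fun x => by
      rw [← mul_assoc, uvb_rho_sq, one_mul]
    have hz' : UVB.incl n β * (UVB.incl n z)⁻¹ = (UVB.incl n z)⁻¹ * UVB.incl n β :=
      ((hz.map (UVB.incl n)).inv_left).eq.symm
    have hz'' : ∀ x, UVB.incl n β * ((UVB.incl n z)⁻¹ * x) = (UVB.incl n z)⁻¹ * (UVB.incl n β * x) :=
      fun x => by rw [← mul_assoc, hz', mul_assoc]
    simp only [map_mul, mul_inv_rev, uvb_rho_inv, mul_assoc, hb', hz'', mul_inv_cancel_left]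
  · generalize hB : UVB.rho (n + 1) n * UVB.incl n z * UVB.rho (n + 1) n * UVB.incl n (w * β) *
      UVB.rho (n + 1) n = B1
    refine markov_trans (markov_conj B1 (UVB.rho (n + 1) n * UVB.rho (n + 1) (n - 1))) ?_
    refine markov_trans (markov_virt _) ?_
    refine markov_conj' (UVB.rho (n + 2) (n - 1) * UVB.rho (n + 2) n) ?_
    have e1 : UVB.incl (n + 1) (UVB.rho (n + 1) n) = UVB.rho (n + 2) n :=
      uvb_incl_rho _ _ (by omega)
    have e2 : UVB.incl (n + 1) (UVB.rho (n + 1) (n - 1)) = UVB.rho (n + 2) (n - 1) :=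
      uvb_incl_rho _ _ (by omega)
    have hb' : ∀ x, UVB.rho (n + 2) n * (UVB.rho (n + 2) n * x) = x := fun x => by
      rw [← mul_assoc, uvb_rho_sq, one_mul]
    have ha' : ∀ x, UVB.rho (n + 2) (n - 1) * (UVB.rho (n + 2) (n - 1) * x) = x := fun x => by
      rw [← mul_assoc, uvb_rho_sq, one_mul]
    rw [← hB]
    simp only [map_mul, mul_inv_rev, uvb_rho_inv, mul_assoc, hb', ha', e1, e2, uvbIncl2,
      MonoidHom.comp_apply, map_inv]

/-- The base generators on the last two strands. -/
def uvbX (n : ℕ) : UVB n := UVB.rho n (n - 1) * (UVB.sigma n (n - 1))⁻¹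
/-- The base generators on the last two strands. -/
def uvbY (n : ℕ) : UVB n := (UVB.sigma n (n - 1))⁻¹ * UVB.rho n (n - 1)

theorem markov_swap (n : ℕ) (hn : 2 ≤ n) (z β : UVB n)
    (hz : z ∈ Subgroup.closure {uvbX n, uvbY n})
    (hx : Commute (uvbX n) β) (hy : Commute (uvbY n) β) :
    Markov ⟨n, uvbX n * uvbY n * z * β⟩ ⟨n, uvbY n * uvbX n * z * β⟩ := by
  have hzβ : Commute z β := by
    have : Subgroup.closure {uvbX n, uvbY n} ≤ Subgroup.centralizer {β} := by
      rw [Subgroup.closure_le]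
      rintro g (rfl | rfl)
      · exact Subgroup.mem_centralizer_singleton_iff.2 hx.eq
      · exact Subgroup.mem_centralizer_singleton_iff.2 hy.eq
    exact Subgroup.mem_centralizer_singleton_iff.1 (this hz)
  refine markov_trans (markov_double n _ z β hzβ) ?_
  refine markov_trans ?_ (markov_symm (markov_double n _ z β hzβ))
  have H := uvb_four (n + 2) (n - 1) (by omega) (by omega)
  have en : n - 1 + 1 = n := by omega
  have en2 : n - 1 + 2 = n + 1 := by omega
  rw [en, en2] at H
  have hσ : uvbIncl2 n (UVB.sigma n (n - 1)) = UVB.sigma (n + 2) (n - 1) := by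
    simp only [uvbIncl2, MonoidHom.comp_apply]
    rw [uvb_incl_sigma _ _ (by omega), uvb_incl_sigma _ _ (by omega)]
  have hρ : uvbIncl2 n (UVB.rho n (n - 1)) = UVB.rho (n + 2) (n - 1) := by
    simp only [uvbIncl2, MonoidHom.comp_apply]
    rw [uvb_incl_rho _ _ (by omega), uvb_incl_rho _ _ (by omega)]
  have hX : uvbIncl2 n (uvbX n) = UVB.rho (n + 2) (n - 1) * (UVB.sigma (n + 2) (n - 1))⁻¹ := by
    rw [uvbX, map_mul, map_inv, hσ, hρ]
  have hY : uvbIncl2 n (uvbY n) = (UVB.sigma (n + 2) (n - 1))⁻¹ * UVB.rho (n + 2) (n - 1) := by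
    rw [uvbY, map_mul, map_inv, hσ, hρ]
  obtain ⟨hp, hx', k1, k2⟩ := H.core
  obtain ⟨m1, m2, m3, m4⟩ := H.L.left
  -- the far generator commutes with everything coming from `UVB n`
  have hfar : ∀ g : UVB n, Commute ((UVB.sigma (n + 2) (n + 1))⁻¹ * UVB.rho (n + 2) (n + 1))
      (uvbIncl2 n g) := by
    intro g
    have := uvb_gen n ((Subgroup.centralizer
      {(UVB.sigma (n + 2) (n + 1))⁻¹ * UVB.rho (n + 2) (n + 1)}).comap (uvbIncl2 n)) ?_ ?_ g
    · exact (Subgroup.mem_centralizer_singleton_iff.1 this).symm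
    · intro k h1 h2
      rw [Subgroup.mem_comap, Subgroup.mem_centralizer_singleton_iff]
      simp only [uvbIncl2, MonoidHom.comp_apply]
      rw [uvb_incl_sigma _ _ (by omega), uvb_incl_sigma _ _ (by omega)]
      have f := uvb_far (n + 2) k (n + 1) (by omega)
      exact (f.1.inv_right.mul_right f.2.2).eq
    · intro k h1 h2
      rw [Subgroup.mem_comap, Subgroup.mem_centralizer_singleton_iff]
      simp only [uvbIncl2, MonoidHom.comp_apply]
      rw [uvb_incl_rho _ _ (by omega), uvb_incl_rho _ _ (by omega)]
      have f := uvb_far (n + 2) k (n + 1) (by omega)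
      have f' := uvb_far (n + 2) (n + 1) k (by omega)
      exact (f'.2.2.symm.inv_right.mul_right f.2.1).eq
  -- commutation with the shifted `z`
  have hz' : ∀ q : UVB (n + 2),
      Commute q (UVB.rho (n + 2) n * uvbIncl2 n (uvbX n) * UVB.rho (n + 2) n) →
      Commute q (UVB.rho (n + 2) n * uvbIncl2 n (uvbY n) * UVB.rho (n + 2) n) →
      Commute q (UVB.rho (n + 2) n * uvbIncl2 n z * UVB.rho (n + 2) n) := by
    intro q q1 q2
    have hle : Subgroup.closure {uvbX n, uvbY n} ≤ (Subgroup.centralizer {q}).comap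
        ((MulAut.conj (UVB.rho (n + 2) n)).toMonoidHom.comp (uvbIncl2 n)) := by
      rw [Subgroup.closure_le]
      rintro g (rfl | rfl)
      · refine Subgroup.mem_centralizer_singleton_iff.2 ?_
        simpa [uvb_rho_inv] using q1.eq.symm
      · refine Subgroup.mem_centralizer_singleton_iff.2 ?_
        simpa [uvb_rho_inv] using q2.eq.symm
    have := Subgroup.mem_centralizer_singleton_iff.1 (Subgroup.mem_comap.1 (hle hz))
    have h3 : Commute q _ := this.symm
    simpa [uvb_rho_inv] using h3
  refine markov_conj' _ (?_ : ((UVB.sigma (n + 2) (n + 1))⁻¹ * UVB.rho (n + 2) (n + 1) *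
    uvbIncl2 n (uvbX n))⁻¹ * _ * _ = _)
  simp only [map_mul]
  refine uvb_swap_conj (uvbIncl2 n (uvbX n)) _ (uvbIncl2 n (uvbY n)) _ _ _ hp ?_ ?_ ?_ ?_ ?_ ?_ ?_
  · rw [hX]; exact hx'
  · refine hz' _ ?_ ?_
    · rw [hX]; exact m1
    · rw [hX, hY]
      have : UVB.rho (n + 2) n * UVB.rho (n + 2) (n - 1) *
        (UVB.rho (n + 2) (n - 1) * (UVB.sigma (n + 2) (n - 1))⁻¹) * UVB.rho (n + 2) (n - 1) *
        UVB.rho (n + 2) n = UVB.rho (n + 2) n * ((UVB.sigma (n + 2) (n - 1))⁻¹ *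
        UVB.rho (n + 2) (n - 1)) * UVB.rho (n + 2) n := by
        have ha' : ∀ x, UVB.rho (n + 2) (n - 1) * (UVB.rho (n + 2) (n - 1) * x) = x := fun x => by
          rw [← mul_assoc, uvb_rho_sq, one_mul]
        simp only [mul_assoc, ha']
      rw [← this]; exact m2
  · refine hz' _ ?_ ?_
    · rw [hX]; exact k1
    · rw [hY]; exact k2
  · exact hx.map _
  · exact hfar _
  · exact hfar _
  · exact hfar _

end MarkovMoves
section Pure
open scoped commutatorElement

variable {n : ℕ} (s : Equiv.Perm (Fin n) →* UVB n)

/-- Conjugate of the base generator. -/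
def uvbC (p : Equiv.Perm (Fin n)) : UVB n := s p * uvbX n * (s p)⁻¹

theorem uvbC_mul (h p : Equiv.Perm (Fin n)) :
    uvbC s (h * p) = s h * uvbC s p * (s h)⁻¹ := by
  simp [uvbC, mul_assoc]

theorem uvb_sec_swap (hs : IsPermSection n s) (d : ℕ) : ∀ (p : ℕ) (h : p + d + 1 + 2 < n),
    Commute (uvbX n) (s (Equiv.swap ⟨p, by omega⟩ ⟨p + d + 1, by omega⟩)) := by
  have base : ∀ (p : ℕ) (h : p + 1 + 2 < n),
      Commute (uvbX n) (s (Equiv.swap ⟨p, by omega⟩ ⟨p + 1, by omega⟩)) := by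
    intro p h
    have := hs (p + 1) (by omega) (by omega)
    simp only [Nat.add_sub_cancel] at this
    rw [this]
    have f := uvb_far n (n - 1) (p + 1) (by omega)
    exact f.2.1.mul_left f.2.2.inv_left
  induction d with
  | zero => intro p h; exact base p h
  | succ d ih =>
    intro p h
    have h1 := ih p (by omega)
    have h2 := base (p + d + 1) (by omega)
    have e := Equiv.swap_mul_swap_mul_swap (x := (⟨p, by omega⟩ : Fin n))
      (y := ⟨p + d + 1, by omega⟩) (z := ⟨p + d + 1 + 1, by omega⟩)
      (by simp [Fin.ext_iff]; omega) (by simp [Fin.ext_iff]; omega)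
    rw [Equiv.swap_comm _ (⟨p, _⟩ : Fin n)] at e
    have e' : (⟨p + (d + 1) + 1, by omega⟩ : Fin n) = ⟨p + d + 1 + 1, by omega⟩ := rfl
    rw [e', ← e, map_mul, map_mul]
    exact (h2.mul_right h1).mul_right h2

theorem uvb_sec_swap' (hs : IsPermSection n s) (p q : Fin n) (hp : (p : ℕ) + 2 < n)
    (hq : (q : ℕ) + 2 < n) : Commute (uvbX n) (s (Equiv.swap p q)) := by
  rcases lt_trichotomy p.val q.val with h | h | h
  · have := uvb_sec_swap s hs (q.val - p.val - 1) p.val (by omega)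
    have e : (⟨p.val + (q.val - p.val - 1) + 1, by omega⟩ : Fin n) = q := Fin.ext (by simp only; omega)
    rw [e] at this
    exact this
  · have : p = q := Fin.ext h
    subst this
    rw [Equiv.swap_self, ← Equiv.Perm.one_def, map_one]
    exact Commute.one_right _
  · have := uvb_sec_swap s hs (p.val - q.val - 1) q.val (by omega)
    rw [Equiv.swap_comm]
    have e : (⟨q.val + (p.val - q.val - 1) + 1, by omega⟩ : Fin n) = p := Fin.ext (by simp only; omega)
    rw [e] at this
    exact this

theorem uvb_stab (hs : IsPermSection n s) (h : Equiv.Perm (Fin n))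
    (hh : ∀ p : Fin n, n ≤ (p : ℕ) + 2 → h p = p) : Commute (uvbX n) (s h) := by
  classical
  have hiff : ∀ x : Fin n, (h x : ℕ) + 2 < n ↔ (x : ℕ) + 2 < n := by
    intro x
    constructor
    · intro hx
      by_contra hc
      rw [hh x (by omega)] at hx
      exact hc hx
    · intro hx
      by_contra hc
      have := h.injective (hh (h x) (by omega))
      rw [this] at hc
      exact hc hx
  have e : Equiv.Perm.ofSubtype (Equiv.Perm.subtypePerm h (p := fun x : Fin n => (x : ℕ) + 2 < n) hiff) = h :=
    Equiv.Perm.ofSubtype_subtypePerm _ (fun x hx => by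
      by_contra hc
      exact hx (hh x (by omega)))
  rw [← e]
  generalize Equiv.Perm.subtypePerm h (p := fun x : Fin n => (x : ℕ) + 2 < n) hiff = f
  induction f using Equiv.Perm.swap_induction_on with
  | one => simp
  | swap_mul f x y hxy ih =>
    rw [map_mul, map_mul, Equiv.Perm.ofSubtype_swap_eq]
    exact (uvb_sec_swap' s hs _ _ x.2 y.2).mul_right ih

theorem uvbC_comm_iff (hs : IsPermSection n s) (h p : Equiv.Perm (Fin n))
    (hh : ∀ p : Fin n, n ≤ (p : ℕ) + 2 → h p = p)
    (H : Commute (uvbX n) (uvbC s (h * p))) : Commute (uvbX n) (uvbC s p) := by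
  have h1 := uvb_stab s hs h hh
  have := uvb_conj_comm (s h)⁻¹ (s h) (by simp) H
  rw [uvbC_mul] at this
  have e : (s h)⁻¹ * uvbX n * s h = uvbX n := by rw [mul_assoc, h1.eq]; simp
  rw [e] at this
  simpa [mul_assoc] using this

theorem uvbC_eq (hs : IsPermSection n s) (p q : Equiv.Perm (Fin n))
    (hh : ∀ x : Fin n, n ≤ (x : ℕ) + 2 → p x = q x) : uvbC s p = uvbC s q := by
  have h1 := uvb_stab s hs (q⁻¹ * p) (fun x hx => by
    rw [Equiv.Perm.mul_apply, hh x hx]; simp)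
  have e : p = q * (q⁻¹ * p) := by simp
  rw [e, uvbC_mul]
  congr 2
  rw [uvbC, ← h1.eq, mul_inv_cancel_right]

theorem uvb_X_conj (n : ℕ) : UVB.rho n (n - 1) * uvbX n * (UVB.rho n (n - 1))⁻¹ = uvbY n := by
  rw [uvb_rho_inv, uvbX, uvbY, ← mul_assoc, uvb_rho_sq, one_mul]

theorem uvbC_cases_comm (hn : 2 ≤ n) (hs : IsPermSection n s) (p : Equiv.Perm (Fin n))
    (h : ¬ ((p ⟨n - 2, by omega⟩ : ℕ) + 2 ≥ n ∧ (p ⟨n - 1, by omega⟩ : ℕ) + 2 ≥ n)) :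
    Commute (uvbX n) (uvbC s p) := by
  obtain ⟨i, hi⟩ : ∃ i : Fin n, i = ⟨n - 2, by omega⟩ := ⟨_, rfl⟩
  obtain ⟨j, hj⟩ : ∃ j : Fin n, j = ⟨n - 1, by omega⟩ := ⟨_, rfl⟩
  rw [← hi, ← hj] at h
  have hi' : (i : ℕ) = n - 2 := by rw [hi]
  have hj' : (j : ℕ) = n - 1 := by rw [hj]
  have hlast : ∀ x : Fin n, n ≤ (x : ℕ) + 2 → x = i ∨ x = j := by
    intro x hx
    have := x.isLt
    rcases (by omega : (x : ℕ) = n - 2 ∨ (x : ℕ) = n - 1) with h | h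
    · left; apply Fin.ext; omega
    · right; apply Fin.ext; omega
  have hij : i ≠ j := by intro e; rw [e] at hi'; omega
  have hpij : p i ≠ p j := fun e => hij (p.injective e)
  -- n ≥ 3
  have hn3 : 3 ≤ n := by
    have h1 := (p i).isLt
    have h2 := (p j).isLt
    omega
  obtain ⟨k, hk⟩ : ∃ k : Fin n, k = ⟨n - 3, by omega⟩ := ⟨_, rfl⟩
  have hk' : (k : ℕ) = n - 3 := by rw [hk]
  have hki : k ≠ i := by intro e; rw [e] at hk'; omega
  have hkj : k ≠ j := by intro e; rw [e] at hk'; omega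
  have sa : s (Equiv.swap k i) = UVB.rho n (n - 2) := by
    rw [← hs (n - 2) (by omega) (by omega)]
    congr 2
  have sb : s (Equiv.swap i j) = UVB.rho n (n - 1) := by
    rw [← hs (n - 1) (by omega) (by omega)]
    congr 2
  have T := uvb_three n (n - 2) (by omega) (by omega)
  have en : n - 2 + 1 = n - 1 := by omega
  rw [en] at T
  obtain ⟨t1, t2, t3, t4⟩ := T.right
  rw [← uvbX] at t1 t2 t3 t4
  have red : ∀ q : Equiv.Perm (Fin n), p i = q i → p j = q j → uvbC s p = uvbC s q := by
    intro q h1 h2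
    refine uvbC_eq s hs _ _ ?_
    intro x hx
    rcases hlast x hx with rfl | rfl
    · exact h1
    · exact h2
  have fixsw : ∀ x y : Fin n, (x : ℕ) + 2 < n → (y : ℕ) + 2 < n → ∀ w : Fin n, n ≤ (w : ℕ) + 2 →
      Equiv.swap x y w = w := by
    intro x y hx hy w hw
    refine Equiv.swap_apply_of_ne_of_ne ?_ ?_
    · rintro rfl; omega
    · rintro rfl; omega
  by_cases hA : (p i : ℕ) + 2 < n
  · by_cases hB : (p j : ℕ) + 2 < n
    · -- both ends are moved away
      have hn4 : 4 ≤ n := by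
        by_contra hc
        exact hpij (Fin.ext (by omega))
      obtain ⟨l, hl⟩ : ∃ l : Fin n, l = ⟨n - 4, by omega⟩ := ⟨_, rfl⟩
      have hl' : (l : ℕ) = n - 4 := by rw [hl]
      have hlk : l ≠ k := by intro e; rw [e] at hl'; omega
      have hli : l ≠ i := by intro e; rw [e] at hl'; omega
      have hlj : l ≠ j := by intro e; rw [e] at hl'; omega
      have sc : s (Equiv.swap l k) = UVB.rho n (n - 3) := by
        rw [← hs (n - 3) (by omega) (by omega)]
        congr 2
      have Q := uvb_four n (n - 3) (by omega) (by omega)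
      have en1 : n - 3 + 1 = n - 2 := by omega
      have en2 : n - 3 + 2 = n - 1 := by omega
      rw [en1, en2] at Q
      have Qs := Q.shift
      rw [← uvbX] at Qs
      refine uvbC_comm_iff s hs (Equiv.swap (p j) k) p (fixsw _ _ hB (by omega)) ?_
      have hpi2 : ((Equiv.swap (p j) k (p i) : Fin n) : ℕ) + 2 < n := by
        rw [Equiv.swap_apply_def]
        split_ifs <;> omega
      refine uvbC_comm_iff s hs (Equiv.swap (Equiv.swap (p j) k (p i)) l) _
        (fixsw _ _ hpi2 (by omega)) ?_
      have hne : Equiv.swap (p j) k (p i) ≠ k := by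
        intro e
        have : Equiv.swap (p j) k (p i) = Equiv.swap (p j) k (p j) := by
          rw [e, Equiv.swap_apply_left]
        exact hpij ((Equiv.swap (p j) k).injective this)
      have hfin : uvbC s (Equiv.swap (Equiv.swap (p j) k (p i)) l * (Equiv.swap (p j) k * p)) =
          uvbC s (Equiv.swap k i * Equiv.swap l k * Equiv.swap i j * Equiv.swap k i) := by
        refine uvbC_eq s hs _ _ ?_
        intro x hx
        rcases hlast x hx with rfl | rfl
        · simp only [Equiv.Perm.mul_apply, Equiv.swap_apply_left, Equiv.swap_apply_right]
          rw [Equiv.swap_apply_of_ne_of_ne hki hkj, Equiv.swap_apply_right,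
            Equiv.swap_apply_of_ne_of_ne hlk hli]
        · simp only [Equiv.Perm.mul_apply, Equiv.swap_apply_left]
          rw [Equiv.swap_apply_of_ne_of_ne hne.symm hlk.symm,
            Equiv.swap_apply_of_ne_of_ne hkj.symm hij.symm, Equiv.swap_apply_right,
            Equiv.swap_apply_of_ne_of_ne hli.symm hki.symm, Equiv.swap_apply_right]
      rw [hfin, uvbC]
      simp only [map_mul, sa, sb, sc]
      rw [Qs]
      exact (Q.hac.symm.mul_left Q.har.symm.inv_left).mul_right
        (Q.hsc.symm.inv_right.mul_left Q.hsr.symm.inv_inv)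
    · refine uvbC_comm_iff s hs (Equiv.swap (p i) k) p (fixsw _ _ hA (by omega)) ?_
      have hki2 : ∀ q : Equiv.Perm (Fin n), k = q i → p j = q j →
          uvbC s (Equiv.swap (p i) k * p) = uvbC s q := by
        intro q h1 h2
        refine uvbC_eq s hs _ _ ?_
        intro x hx
        rcases hlast x hx with rfl | rfl
        · simpa using h1
        · rw [← h2, Equiv.Perm.mul_apply, fixsw _ _ hA (by omega) _ (by omega)]
      rcases hlast (p j) (by omega) with e | e
      · rw [hki2 (Equiv.swap i j * Equiv.swap k i), uvbC]
        · simp only [map_mul, sa, sb]; exact t2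
        · simp [Equiv.swap_apply_of_ne_of_ne hki hkj]
        · simp [Equiv.swap_apply_of_ne_of_ne hkj.symm hij.symm, e]
      · rw [hki2 (Equiv.swap k i), uvbC]
        · simp only [sa]; exact t3
        · simp
        · simp [Equiv.swap_apply_of_ne_of_ne hkj.symm hij.symm, e]
  · have hB : (p j : ℕ) + 2 < n := by omega
    refine uvbC_comm_iff s hs (Equiv.swap (p j) k) p (fixsw _ _ hB (by omega)) ?_
    have hki2 : ∀ q : Equiv.Perm (Fin n), p i = q i → k = q j →
        uvbC s (Equiv.swap (p j) k * p) = uvbC s q := by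
      intro q h1 h2
      refine uvbC_eq s hs _ _ ?_
      intro x hx
      rcases hlast x hx with rfl | rfl
      · rw [← h1, Equiv.Perm.mul_apply, fixsw _ _ hB (by omega) _ (by omega)]
      · simpa using h2
    rcases hlast (p i) (by omega) with e | e
    · rw [hki2 (Equiv.swap i j * Equiv.swap k i * Equiv.swap i j), uvbC]
      · simp only [map_mul, sa, sb]; exact t1
      · simp [Equiv.swap_apply_of_ne_of_ne hkj.symm hij.symm, e]
      · simp [Equiv.swap_apply_of_ne_of_ne hki hkj]
    · rw [hki2 (Equiv.swap k i * Equiv.swap i j), uvbC]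
      · simp only [map_mul, sa, sb]; exact t4
      · simp [Equiv.swap_apply_of_ne_of_ne hkj.symm hij.symm, e]
      · simp

theorem uvbC_class (hn : 2 ≤ n) (hs : IsPermSection n s) (p : Equiv.Perm (Fin n)) :
    uvbC s p = uvbX n ∨ uvbC s p = uvbY n ∨
      (Commute (uvbX n) (uvbC s p) ∧ Commute (uvbY n) (uvbC s p)) := by
  have sb : s (Equiv.swap ⟨n - 2, by omega⟩ ⟨n - 1, by omega⟩) = UVB.rho n (n - 1) := by
    rw [← hs (n - 1) (by omega) (by omega)]
    congr 2
  have hlast : ∀ x : Fin n, n ≤ (x : ℕ) + 2 → x = ⟨n - 2, by omega⟩ ∨ x = ⟨n - 1, by omega⟩ := by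
    intro x hx
    have := x.isLt
    rcases (by omega : (x : ℕ) = n - 2 ∨ (x : ℕ) = n - 1) with h | h
    · left; apply Fin.ext; simpa using h
    · right; apply Fin.ext; simpa using h
  have hij : (⟨n - 2, by omega⟩ : Fin n) ≠ ⟨n - 1, by omega⟩ := by
    intro e
    have := congrArg Fin.val e
    simp only at this
    omega
  by_cases h : ((p ⟨n - 2, by omega⟩ : ℕ) + 2 ≥ n ∧ (p ⟨n - 1, by omega⟩ : ℕ) + 2 ≥ n)
  · have hinj : p ⟨n - 2, by omega⟩ ≠ p ⟨n - 1, by omega⟩ := fun e => hij (p.injective e)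
    rcases hlast _ h.1 with e1 | e1
    · left
      have e2 : p ⟨n - 1, by omega⟩ = ⟨n - 1, by omega⟩ := by
        rcases hlast _ h.2 with e2 | e2
        · exact absurd (e1.trans e2.symm) hinj
        · exact e2
      rw [uvbC_eq s hs p 1]
      · simp [uvbC]
      · intro x hx
        rcases hlast x hx with rfl | rfl
        · simpa using e1
        · simpa using e2
    · right; left
      have e2 : p ⟨n - 1, by omega⟩ = ⟨n - 2, by omega⟩ := by
        rcases hlast _ h.2 with e2 | e2
        · exact e2
        · exact absurd (e1.trans e2.symm) hinj
      rw [uvbC_eq s hs p (Equiv.swap ⟨n - 2, by omega⟩ ⟨n - 1, by omega⟩)]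
      · rw [uvbC, sb, uvb_X_conj]
      · intro x hx
        rcases hlast x hx with rfl | rfl
        · rw [Equiv.swap_apply_left]; exact e1
        · rw [Equiv.swap_apply_right]; exact e2
  · right; right
    refine ⟨uvbC_cases_comm s hn hs p h, ?_⟩
    have h2 := uvbC_cases_comm s hn hs
      (Equiv.swap ⟨n - 2, by omega⟩ ⟨n - 1, by omega⟩ * p) (by
        intro hc
        apply h
        have aux : ∀ y : Fin n, ((Equiv.swap (⟨n - 2, by omega⟩ : Fin n) ⟨n - 1, by omega⟩ y : Fin n) : ℕ)
            + 2 ≥ n → (y : ℕ) + 2 ≥ n := by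
          intro y hy
          rw [Equiv.swap_apply_def] at hy
          split_ifs at hy with h1 h2
          · rw [h1]; simp only; omega
          · rw [h2]; simp only; omega
          · exact hy
        exact ⟨aux _ hc.1, aux _ hc.2⟩)
    rw [uvbC_mul, sb] at h2
    have := uvb_conj_comm (UVB.rho n (n - 1)) (UVB.rho n (n - 1))⁻¹ (by simp) h2
    rw [uvb_X_conj] at this
    have e : ∀ w : UVB n, UVB.rho n (n - 1) * (UVB.rho n (n - 1) * w * (UVB.rho n (n - 1))⁻¹) *
        (UVB.rho n (n - 1))⁻¹ = w := by
      intro w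
      have h4 := uvb_rho_sq n (n - 1)
      rw [uvb_rho_inv]
      calc _ = (UVB.rho n (n - 1) * UVB.rho n (n - 1)) * w * (UVB.rho n (n - 1) * UVB.rho n (n - 1)) := by
            group
        _ = w := by rw [h4]; simp
    rwa [e] at this

/-- Each elementary pure generator is a conjugate of the base one. -/
theorem uvb_elem_conj (hs : IsPermSection n s) (d : ℕ) : ∀ k, 1 ≤ k → k + d = n - 1 →
    ∃ p, UVB.rho n k * (UVB.sigma n k)⁻¹ = uvbC s p := by
  induction d with
  | zero =>
    intro k h1 h2
    refine ⟨1, ?_⟩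
    have : k = n - 1 := by omega
    subst this
    simp [uvbC, uvbX]
  | succ d ih =>
    intro k h1 h2
    obtain ⟨p, hp⟩ := ih (k + 1) (by omega) (by omega)
    have T := uvb_three n k h1 (by omega)
    have e := T.x_eq
    have ea := hs k h1 (by omega)
    have eb := hs (k + 1) (by omega) (by omega)
    refine ⟨Equiv.swap ⟨k + 1 - 1, by omega⟩ ⟨k + 1, by omega⟩ *
      (Equiv.swap ⟨k - 1, by omega⟩ ⟨k, by omega⟩ * p), ?_⟩
    rw [uvbC_mul, uvbC_mul, ea, eb, ← hp, e, uvb_rho_inv, uvb_rho_inv]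
    have ha' : ∀ x, UVB.rho n k * (UVB.rho n k * x) = x := fun x => by
      rw [← mul_assoc, uvb_rho_sq, one_mul]
    have hb' : ∀ x, UVB.rho n (k + 1) * (UVB.rho n (k + 1) * x) = x := fun x => by
      rw [← mul_assoc, uvb_rho_sq, one_mul]
    simp only [mul_assoc, ha', hb', uvb_rho_sq, mul_one]

theorem uvb_iota_sec (hn : 2 ≤ n) (ι : UVB n →* Equiv.Perm (Fin n)) (hι : IsIota n ι)
    (hs : IsPermSection n s) (p : Equiv.Perm (Fin n)) : ι (s p) = p := by
  obtain ⟨m, rfl⟩ : ∃ m, n = m + 1 := ⟨n - 1, by omega⟩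
  have : ι.comp s = MonoidHom.id _ := by
    refine MonoidHom.eq_of_eqOn_denseM (Equiv.Perm.mclosure_swap_castSucc_succ m) ?_
    rintro _ ⟨i, rfl⟩
    have h1 := hs (i.val + 1) (by omega) (by have := i.isLt; omega)
    have h2 := (hι (i.val + 1) (by omega) (by have := i.isLt; omega)).2
    have h3 := h2
    rw [← h1] at h3
    exact h3
  exact DFunLike.congr_fun this p

theorem uvb_ker_eq (hn : 2 ≤ n) (ι : UVB n →* Equiv.Perm (Fin n)) (hι : IsIota n ι)
    (hs : IsPermSection n s) : ι.ker = Subgroup.closure (Set.range (uvbC s)) := by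
  have hle : Subgroup.closure (Set.range (uvbC s)) ≤ ι.ker := by
    rw [Subgroup.closure_le]
    rintro _ ⟨p, rfl⟩
    rw [SetLike.mem_coe, MonoidHom.mem_ker, uvbC, map_mul, map_mul, map_inv, uvbX, map_mul, map_inv]
    have := hι (n - 1) (by omega) (by omega)
    rw [this.1, this.2]
    simp
  have hnorm : ∀ p t, t ∈ Subgroup.closure (Set.range (uvbC s)) →
      s p * t * (s p)⁻¹ ∈ Subgroup.closure (Set.range (uvbC s)) := by
    intro p t ht
    have : Subgroup.closure (Set.range (uvbC s)) ≤
        (Subgroup.closure (Set.range (uvbC s))).comap (MulAut.conj (s p)).toMonoidHom := by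
      refine (Subgroup.closure_le _).2 ?_
      rintro _ ⟨q, rfl⟩
      refine Subgroup.subset_closure ⟨p * q, ?_⟩
      rw [uvbC_mul]; rfl
    exact this ht
  refine le_antisymm ?_ hle
  let H : Subgroup (UVB n) :=
    { carrier := {g | ∃ t ∈ Subgroup.closure (Set.range (uvbC s)), ∃ p, g = t * s p}
      one_mem' := ⟨1, one_mem _, 1, by simp⟩
      mul_mem' := by
        rintro _ _ ⟨t, ht, p, rfl⟩ ⟨t', ht', p', rfl⟩
        exact ⟨t * (s p * t' * (s p)⁻¹), mul_mem ht (hnorm p t' ht'), p * p', by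
          rw [map_mul]; group⟩
      inv_mem' := by
        rintro _ ⟨t, ht, p, rfl⟩
        exact ⟨s p⁻¹ * t⁻¹ * (s p⁻¹)⁻¹, hnorm _ _ (inv_mem ht), p⁻¹, by
          rw [map_inv]; group⟩ }
  have hρ : ∀ k, 1 ≤ k → k ≤ n - 1 → UVB.rho n k ∈ H := by
    intro k h1 h2
    exact ⟨1, one_mem _, _, by rw [one_mul, hs k h1 h2]⟩
  have hσ : ∀ k, 1 ≤ k → k ≤ n - 1 → UVB.sigma n k ∈ H := by
    intro k h1 h2
    obtain ⟨p, hp⟩ := uvb_elem_conj s hs (n - 1 - k) k h1 (by omega)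
    have h3 : UVB.rho n k * (UVB.sigma n k)⁻¹ ∈ H :=
      ⟨_, Subgroup.subset_closure ⟨p, rfl⟩, 1, by rw [hp]; simp⟩
    have : UVB.sigma n k = (UVB.rho n k * (UVB.sigma n k)⁻¹)⁻¹ * UVB.rho n k := by simp
    rw [this]
    exact mul_mem (inv_mem h3) (hρ k h1 h2)
  intro g hg
  obtain ⟨t, ht, p, rfl⟩ := uvb_gen n H hσ hρ g
  have h1 := hle ht
  rw [MonoidHom.mem_ker] at h1 hg
  rw [map_mul, h1, one_mul, uvb_iota_sec s hn ι hι hs] at hg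
  subst hg
  simpa using ht

theorem uvb_decomp (hn : 2 ≤ n) (hs : IsPermSection n s) (g : UVB n)
    (hg : g ∈ Subgroup.closure (Set.range (uvbC s))) :
    ∃ z ∈ Subgroup.closure {uvbX n, uvbY n}, ∃ β, Commute (uvbX n) β ∧ Commute (uvbY n) β ∧
      g = z * β := by
  have hcomm : ∀ z ∈ Subgroup.closure {uvbX n, uvbY n}, ∀ β, Commute (uvbX n) β →
      Commute (uvbY n) β → Commute z β := by
    intro z hz β hx hy
    have : Subgroup.closure {uvbX n, uvbY n} ≤ Subgroup.centralizer {β} := by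
      rw [Subgroup.closure_le]
      rintro g (rfl | rfl)
      · exact Subgroup.mem_centralizer_singleton_iff.2 hx.eq
      · exact Subgroup.mem_centralizer_singleton_iff.2 hy.eq
    exact Subgroup.mem_centralizer_singleton_iff.1 (this hz)
  induction hg using Subgroup.closure_induction with
  | mem x hx =>
    obtain ⟨p, rfl⟩ := hx
    rcases uvbC_class s hn hs p with h | h | h
    · exact ⟨_, Subgroup.subset_closure (Or.inl h), 1, Commute.one_right _, Commute.one_right _,
        by simp⟩
    · exact ⟨_, Subgroup.subset_closure (Or.inr h), 1, Commute.one_right _, Commute.one_right _,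
        by simp⟩
    · exact ⟨1, one_mem _, _, h.1, h.2, by simp⟩
  | one => exact ⟨1, one_mem _, 1, Commute.one_right _, Commute.one_right _, by simp⟩
  | mul x y _ _ ihx ihy =>
    obtain ⟨z, hz, β, h1, h2, rfl⟩ := ihx
    obtain ⟨z', hz', β', h1', h2', rfl⟩ := ihy
    refine ⟨z * z', mul_mem hz hz', β * β', h1.mul_right h1', h2.mul_right h2', ?_⟩
    have := (hcomm z' hz' β h1 h2).eq
    rw [mul_assoc, ← mul_assoc β, ← this]
    group
  | inv x _ ih =>
    obtain ⟨z, hz, β, h1, h2, rfl⟩ := ih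
    refine ⟨z⁻¹, inv_mem hz, β⁻¹, h1.inv_right, h2.inv_right, ?_⟩
    rw [(hcomm z hz β h1 h2).eq, mul_inv_rev]

/-- The pure braids that can be absorbed up to Markov equivalence. -/
def uvbN (n : ℕ) (K : Subgroup (UVB n)) : Subgroup (UVB n) where
  carrier := {c | c ∈ K ∧ ∀ α ∈ K, Markov ⟨n, c * α⟩ ⟨n, α⟩}
  one_mem' := ⟨one_mem _, fun α _ => by rw [one_mul]; exact markov_refl _⟩
  mul_mem' := by
    rintro c c' ⟨hc, h⟩ ⟨hc', h'⟩
    refine ⟨mul_mem hc hc', fun α hα => ?_⟩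
    rw [mul_assoc]
    exact markov_trans (h _ (mul_mem hc' hα)) (h' _ hα)
  inv_mem' := by
    rintro c ⟨hc, h⟩
    refine ⟨inv_mem hc, fun α hα => ?_⟩
    have := h _ (mul_mem (inv_mem hc) hα)
    rw [mul_inv_cancel_left] at this
    exact markov_symm this

theorem uvbN_normal (n : ℕ) (K : Subgroup (UVB n)) (hK : K.Normal) : (uvbN n K).Normal where
  conj_mem := by
    rintro c ⟨hc, h⟩ g
    refine ⟨hK.conj_mem c hc g, fun α hα => ?_⟩
    have h1 := h (g⁻¹ * α * g) (by simpa using hK.conj_mem α hα g⁻¹)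
    refine markov_trans (markov_conj' g⁻¹ ?_) (markov_trans h1 (markov_conj' g ?_))
    · group
    · group

theorem uvb_comm_le (hn : 2 ≤ n) (ι : UVB n →* Equiv.Perm (Fin n)) (hι : IsIota n ι)
    (hs : IsPermSection n s) : ⁅ι.ker, ι.ker⁆ ≤ uvbN n ι.ker := by
  have hN := uvbN_normal n ι.ker inferInstance
  have hker := uvb_ker_eq s hn ι hι hs
  have hXY : ⁅uvbX n, uvbY n⁆ ∈ uvbN n ι.ker := by
    have hmem := hι (n - 1) (by omega) (by omega)
    have hX : uvbX n ∈ ι.ker := by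
      rw [MonoidHom.mem_ker, uvbX, map_mul, map_inv, hmem.1, hmem.2]; simp
    have hY : uvbY n ∈ ι.ker := by
      rw [MonoidHom.mem_ker, uvbY, map_mul, map_inv, hmem.1, hmem.2]; simp
    refine ⟨?_, ?_⟩
    · rw [commutatorElement_def]
      exact mul_mem (mul_mem (mul_mem hX hY) (inv_mem hX)) (inv_mem hY)
    · intro α hα
      have h1 : (uvbX n)⁻¹ * (uvbY n)⁻¹ * α ∈ ι.ker :=
        mul_mem (mul_mem (inv_mem hX) (inv_mem hY)) hα
      rw [hker] at h1
      obtain ⟨z, hz, β, hx, hy, e⟩ := uvb_decomp s hn hs _ h1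
      have := markov_swap n hn z β hz hx hy
      rw [mul_assoc _ z, mul_assoc _ z, ← e] at this
      have e1 : ⁅uvbX n, uvbY n⁆ * α = uvbX n * uvbY n * ((uvbX n)⁻¹ * (uvbY n)⁻¹ * α) := by
        rw [commutatorElement_def]; group
      have e2 : uvbY n * uvbX n * ((uvbX n)⁻¹ * (uvbY n)⁻¹ * α) = α := by group
      rw [e1]
      rw [e2] at this
      exact this
  have hgen : ∀ p q, ⁅uvbC s p, uvbC s q⁆ ∈ uvbN n ι.ker := by
    intro p q
    have h1 : ⁅uvbX n, uvbC s (p⁻¹ * q)⁆ ∈ uvbN n ι.ker := by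
      rcases uvbC_class s hn hs (p⁻¹ * q) with h | h | h
      · rw [h, commutatorElement_self]; exact one_mem _
      · rw [h]; exact hXY
      · rw [commutatorElement_eq_one_iff_commute.2 h.1]; exact one_mem _
    have h2 := hN.conj_mem _ h1 (s p)
    have : s p * ⁅uvbX n, uvbC s (p⁻¹ * q)⁆ * (s p)⁻¹ = ⁅uvbC s p, uvbC s q⁆ := by
      rw [uvbC_mul, commutatorElement_def, commutatorElement_def, map_inv]
      conv_rhs => rw [uvbC.eq_def s p]
      group
    rwa [this] at h2
  rw [Subgroup.commutator_le]
  have hq : ∀ g h : UVB n, ⁅g, h⁆ ∈ uvbN n ι.ker ↔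
      Commute (QuotientGroup.mk' (uvbN n ι.ker) g) (QuotientGroup.mk' (uvbN n ι.ker) h) := by
    intro g h
    rw [← commutatorElement_eq_one_iff_commute, ← map_commutatorElement, QuotientGroup.mk'_apply,
      QuotientGroup.eq_one_iff]
  intro g hg h hh
  rw [hker] at hg hh
  rw [hq]
  have step1 : ∀ p, Commute (QuotientGroup.mk' (uvbN n ι.ker) (uvbC s p))
      (QuotientGroup.mk' (uvbN n ι.ker) h) := by
    intro p
    induction hh using Subgroup.closure_induction with
    | mem x hx =>
      obtain ⟨q, rfl⟩ := hx
      exact (hq _ _).1 (hgen p q)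
    | one => rw [map_one]; exact Commute.one_right _
    | mul x y _ _ ihx ihy => rw [map_mul]; exact ihx.mul_right ihy
    | inv x _ ih => rw [map_inv]; exact ih.inv_right
  induction hg using Subgroup.closure_induction with
  | mem x hx =>
    obtain ⟨q, rfl⟩ := hx
    exact step1 q
  | one => rw [map_one]; exact Commute.one_left _
  | mul x y _ _ ihx ihy => rw [map_mul]; exact ihx.mul_left ihy
  | inv x _ ih => rw [map_inv]; exact ih.inv_left

end Pure

/-! ## Statement 9 -/

/-- Corollary 1 of the paper.  For `n ≥ 2` and α, β ∈ UVP n: if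
there is a permutation π ∈ S_n with `s(π) α s(π)⁻¹ β⁻¹ ∈ [UVP n, UVP n]`, then α and β
are fused Markov equivalent. -/
theorem statement9 (n : ℕ) (hn : 2 ≤ n)
    (ι : UVB n →* Equiv.Perm (Fin n)) (hι : IsIota n ι)
    (s : Equiv.Perm (Fin n) →* UVB n) (hs : IsPermSection n s)
    (α β : UVB n) (hα : α ∈ ι.ker) (hβ : β ∈ ι.ker)
    (π : Equiv.Perm (Fin n))
    (h : s π * α * (s π)⁻¹ * β⁻¹ ∈ ⁅ι.ker, ι.ker⁆) :
    Markov ⟨n, α⟩ ⟨n, β⟩ := by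
  have hc := (uvb_comm_le s hn ι hι hs h).2 β hβ
  rw [inv_mul_cancel_right] at hc
  exact markov_trans (markov_conj α (s π)) hc
end
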